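/- arXiv:1211.2864 — 2 statements merged into one kernel-verified Lean document; each statement's English description precedes it below -/
import Mathlib

section
/- The sets R''_0, R''_1, R''_2, R''_3 partition H and form a three-class translation association scheme on the additive group of H: there exist natural numbers p^m_{k,l} for 0 ≤ k, l, m ≤ 3 such that for all k, l, m and every d ∈ R''_m, the number of z ∈ H with z ∈ R''_k and d + z ∈ R''_l equals p^m_{k,l} (note that in characteristic 2 one has d − z = d + z, so the relations are symmetric). -/
noncomputable section

open scoped BigOperators

/-- `M = 2^{2s} + 2^s + 1`. -/
abbrev Mof (s : ℕ) : ℕ := 2 ^ (2 * s) + 2 ^ s + 1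

/-- The relative trace from `F` (of order `2^{3s}`) to its subfield `E` of order `2^s`:
`Tr_{F/E}(x) = x + x^{2^s} + x^{2^{2s}}`, viewed as a map `F → F`. -/
def trFE {F : Type*} [Field F] (s : ℕ) (x : F) : F :=
  x + x ^ (2 ^ s) + x ^ (2 ^ (2 * s))

/-- `ψ(x) = 1` if the absolute trace `Tr_{F/𝔽₂}(x) = 0`, and `-1` otherwise. -/
def psi (F : Type*) [Field F] [Algebra (ZMod 2) F] (x : F) : ℤ :=
  if Algebra.trace (ZMod 2) F x = 0 then 1 else -1

/-- `ψ(cS) = ∑_{x ∈ S} ψ(c·x)`. -/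
def psiSum (F : Type*) [Field F] [Algebra (ZMod 2) F] (c : F) (S : Set F) : ℤ :=
  ∑ᶠ x ∈ S, psi F (c * x)

/-- `D = {u ∈ F^× : Tr_{F/E}(u⁻¹) = 0}`. -/
def Dset (F : Type*) [Field F] (s : ℕ) : Set F :=
  {u | u ≠ 0 ∧ trFE s u⁻¹ = 0}

/-- `S_a = {u ∈ F^× : Tr_{F/E}(u^{2^s+1}) = 0 ∧ Tr_{F/E}(ω^a u) = 0}`. -/
def Sa {F : Type*} [Field F] (s : ℕ) (ω : F) (a : ℤ) : Set F :=
  {u | u ≠ 0 ∧ trFE s (u ^ (2 ^ s + 1)) = 0 ∧ trFE s (ω ^ a * u) = 0}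

/-- `T₁ ⊆ ℤ/Mℤ`: classes `a` with `|S_a| = 2^s - 1`. -/
def T1 {F : Type*} [Field F] (s : ℕ) (ω : F) : Set (ZMod (Mof s)) :=
  {x | (Sa s ω (x.val : ℤ)).ncard = 2 ^ s - 1}

/-- `T₂ ⊆ ℤ/Mℤ`: classes `a` with `|S_a| = 2(2^s - 1)`. -/
def T2 {F : Type*} [Field F] (s : ℕ) (ω : F) : Set (ZMod (Mof s)) :=
  {x | (Sa s ω (x.val : ℤ)).ncard = 2 * (2 ^ s - 1)}

/-- `T₃ ⊆ ℤ/Mℤ`: classes `a` with `|S_a| = 0`. -/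
def T3 {F : Type*} [Field F] (s : ℕ) (ω : F) : Set (ZMod (Mof s)) :=
  {x | (Sa s ω (x.val : ℤ)).ncard = 0}

/-- The cyclotomic class `C_i^{(M,K)} = {g^{i+Mt} : t ∈ ℤ}`. -/
def cyc {K : Type*} [Field K] (M : ℕ) (g : K) (i : ℤ) : Set K :=
  {x | ∃ t : ℤ, x = g ^ (i + (M : ℤ) * t)}

/-- `⋃_{i ∈ T} C_i^{(M,K)}` for a set `T ⊆ ℤ/Mℤ` of indices. -/
def Rclass {K : Type*} [Field K] (s : ℕ) (g : K) (T : Set (ZMod (Mof s))) : Set K :=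
  ⋃ i ∈ T, cyc (Mof s) g ((i.val : ℤ))

/-- The family `R_0 = {0}`, `R_k = ⋃_{i ∈ T_k} C_i^{(M,K)}`, `k = 1, 2, 3`. -/
def Rfam {F K : Type*} [Field F] [Field K] (s : ℕ) (ω : F) (g : K) : Fin 4 → Set K :=
  ![{0}, Rclass s g (T1 s ω), Rclass s g (T2 s ω), Rclass s g (T3 s ω)]

/-- Indicator `[P] = 1` if `P` holds, `0` otherwise. -/
def Ind (P : Prop) : ℤ := @ite ℤ P (Classical.propDecidable P) 1 0


namespace HD
section
open scoped Classical
set_option linter.unusedSectionVars false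
variable {F H : Type*} [Field F] [Fintype F] [Field H] [Fintype H] [Algebra F H]

def sF (p : F × F × F) : F × F × F :=
  (p.1 + p.2.1 + p.2.2, p.1 * p.2.1 + p.1 * p.2.2 + p.2.1 * p.2.2, p.1 * p.2.1 * p.2.2)

def sH (F : Type*) {H : Type*} [Field F] [Field H] [Algebra F H] (x : H) : F × F × F :=
  (Algebra.trace F H x, Algebra.trace F H (x * x ^ Nat.card F), Algebra.norm F x)

def sR (p : F × F × F) : F × F × F :=
  (p.2.1, p.2.2, p.1 ^ 3 - p.2.1 * p.1 ^ 2 + p.2.2 * p.1)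

theorem trace3 (h3 : Module.finrank F H = 3) (x : H) :
    algebraMap F H (Algebra.trace F H x) = x + x ^ Nat.card F + x ^ (Nat.card F ^ 2) := by
  rw [FiniteField.algebraMap_trace_eq_sum_pow, h3]
  simp [Finset.sum_range_succ]

theorem norm3 (h3 : Module.finrank F H = 3) (x : H) :
    algebraMap F H (Algebra.norm F x) = x * x ^ Nat.card F * x ^ (Nat.card F ^ 2) := by
  rw [FiniteField.algebraMap_norm_eq_prod_pow, h3]
  simp [Finset.prod_range_succ]

theorem pow3 (h3 : Module.finrank F H = 3) (x : H) : x ^ (Nat.card F ^ 3) = x := by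
  have h := Module.natCard_eq_pow_finrank (K := F) (V := H)
  rw [h3] at h
  rw [← h, Nat.card_eq_fintype_card]
  exact FiniteField.pow_card x

theorem sH_spec (h3 : Module.finrank F H = 3) (x y : H) :
    y ^ 3 - algebraMap F H (sH F x).1 * y ^ 2 + algebraMap F H (sH F x).2.1 * y
      - algebraMap F H (sH F x).2.2
    = (y - x) * (y - x ^ Nat.card F) * (y - x ^ (Nat.card F ^ 2)) := by
  simp only [sH, trace3 h3, norm3 h3]
  have h1 : (x * x ^ Nat.card F) ^ Nat.card F = x ^ Nat.card F * x ^ (Nat.card F ^ 2) := by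
    rw [mul_pow, ← pow_mul, sq]
  have h2 : (x * x ^ Nat.card F) ^ (Nat.card F ^ 2) = x ^ (Nat.card F ^ 2) * x := by
    rw [mul_pow, ← pow_mul x (Nat.card F), ← pow_succ', pow3 h3]
  rw [h1, h2]
  ring

theorem powF (x : F) : x ^ Nat.card F = x := by
  rw [Nat.card_eq_fintype_card]; exact FiniteField.pow_card x

/-- the root in `F` of the characteristic polynomial of `x` is `x`. -/
theorem root_eq (h3 : Module.finrank F H = 3) (x : H) (r : F)
    (hr : r ^ 3 - (sH F x).1 * r ^ 2 + (sH F x).2.1 * r = (sH F x).2.2) :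
    x = algebraMap F H r := by
  have h := sH_spec h3 x (algebraMap F H r)
  have h0 : (algebraMap F H r) ^ 3 - algebraMap F H (sH F x).1 * (algebraMap F H r) ^ 2
      + algebraMap F H (sH F x).2.1 * (algebraMap F H r) - algebraMap F H (sH F x).2.2 = 0 := by
    rw [← hr]; simp
  rw [h0] at h
  have hf : ∀ n, (algebraMap F H r) ^ (Nat.card F ^ n) = algebraMap F H r := by
    intro n
    induction n with
    | zero => simp
    | succ n ih => rw [pow_succ, pow_mul, ih, ← map_pow, powF]
  rcases mul_eq_zero.1 h.symm with h | h
  · rcases mul_eq_zero.1 h with h | h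
    · exact (sub_eq_zero.1 h).symm
    · rw [← pow3 h3 x, show Nat.card F ^ 3 = Nat.card F * Nat.card F ^ 2 by ring, pow_mul,
        ← sub_eq_zero.1 h, hf]
  · rw [← pow3 h3 x, show Nat.card F ^ 3 = Nat.card F ^ 2 * Nat.card F by ring, pow_mul,
      ← sub_eq_zero.1 h]
    have := hf 1
    rwa [pow_one] at this

theorem card_sR (P : F × F × F) :
    (Finset.univ.filter fun p : F × F × F => sR p = P).card =
    (Finset.univ.filter fun x : F => x ^ 3 - P.1 * x ^ 2 + P.2.1 * x = P.2.2).card := by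
  symm
  refine Finset.card_bij (fun x _ => (x, P.1, P.2.1)) ?_ ?_ ?_
  · intro x hx
    simp only [Finset.mem_filter, Finset.mem_univ, true_and] at hx
    rw [Finset.mem_filter]
    exact ⟨Finset.mem_univ _, by simp [sR, hx]⟩
  · intro x _ y _ h
    simpa using h
  · rintro ⟨x, a, e⟩ h
    rw [Finset.mem_filter] at h
    have h := h.2
    subst h
    exact ⟨x, by rw [Finset.mem_filter]; exact ⟨Finset.mem_univ _, by simp [sR]⟩, rfl⟩

theorem third {a e c x y : F} (hxy : x ≠ y) (hx : x ^ 3 - a * x ^ 2 + e * x = c)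
    (hy : y ^ 3 - a * y ^ 2 + e * y = c) :
    sF (x, y, a - x - y) = (a, e, c) := by
  have h : (x - y) * (x ^ 2 + x * y + y ^ 2 - a * (x + y) + e) = 0 := by
    linear_combination hx - hy
  have h' := (mul_eq_zero.1 h).resolve_left (sub_ne_zero.2 hxy)
  simp only [sF, Prod.mk.injEq]
  refine ⟨by ring, by linear_combination -h', ?_⟩
  linear_combination hx - x * h'

theorem cubic_roots {K : Type*} [Field K] (a e c : K) (s : Finset K)
    (hs : ∀ x ∈ s, x ^ 3 - a * x ^ 2 + e * x = c) : s.card ≤ 3 := by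
  obtain ⟨p, hp⟩ : ∃ p : Polynomial K, p = (Polynomial.C 1 * Polynomial.X ^ 3
    + Polynomial.C (-a) * Polynomial.X ^ 2
    + Polynomial.C e * Polynomial.X + Polynomial.C (-c)) := ⟨_, rfl⟩
  have hd : p.natDegree = 3 := by rw [hp]; exact Polynomial.natDegree_cubic one_ne_zero
  have h0 : p ≠ 0 := by intro h; rw [h] at hd; simp at hd
  rw [← hd]
  refine Polynomial.card_le_degree_of_subset_roots (Z := s) ?_
  intro x hx
  rw [Finset.mem_val] at hx
  rw [Polynomial.mem_roots h0, Polynomial.IsRoot, hp]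
  have := hs x hx
  simp
  linear_combination this

theorem fiber_le (h3 : Module.finrank F H = 3) (P : F × F × F) :
    (Finset.univ.filter fun x : H => sH F x = P).card
      + 3 * (Finset.univ.filter fun p : F × F × F => sR p = P).card
    ≤ 3 + (Finset.univ.filter fun p : F × F × F => sF p = P).card := by
  rw [card_sR]
  obtain ⟨a, e, c⟩ := P
  set R := Finset.univ.filter fun x : F => x ^ 3 - a * x ^ 2 + e * x = c with hR
  have memR : ∀ x, x ∈ R ↔ x ^ 3 - a * x ^ 2 + e * x = c := by intro x; simp [hR]
  set T := Finset.univ.filter fun p : F × F × F => sF p = (a, e, c) with hT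
  have memT : ∀ p, p ∈ T ↔ sF p = (a, e, c) := by intro x; simp [hT]
  set S := Finset.univ.filter fun x : H => sH F x = (a, e, c) with hS
  have memS : ∀ x, x ∈ S ↔ sH F x = (a, e, c) := by intro x; simp [hS]
  change S.card + 3 * R.card ≤ 3 + T.card
  have rotT : ∀ x y z, (x, y, z) ∈ T → (y, z, x) ∈ T := by
    intro x y z h
    rw [memT] at h ⊢
    rw [← h]; simp only [sF, Prod.mk.injEq]
    refine ⟨by ring, by ring, by ring⟩
  have swT : ∀ x y z, (x, y, z) ∈ T → (y, x, z) ∈ T := by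
    intro x y z h
    rw [memT] at h ⊢
    rw [← h]; simp only [sF, Prod.mk.injEq]
    refine ⟨by ring, by ring, by ring⟩
  have hR3 : R.card ≤ 3 := cubic_roots a e c R (fun x hx => (memR x).1 hx)
  have hS3 : S.card ≤ 3 := by
    refine cubic_roots (algebraMap F H a) (algebraMap F H e) (algebraMap F H c) S ?_
    intro x hx
    have h := sH_spec h3 x x
    rw [(memS x).1 hx] at h
    simp at h
    linear_combination h
  rcases R.eq_empty_or_nonempty with h0 | ⟨r, hr⟩
  · rw [h0]; simp; omega
  rcases S.eq_empty_or_nonempty with hs0 | ⟨x, hx⟩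
  · rw [hs0]
    have hpos : 0 < R.card := Finset.card_pos.2 ⟨r, hr⟩
    have hcase : R.card = 1 ∨ R.card = 2 ∨ R.card = 3 := by omega
    rcases hcase with h | h | h
    · rw [h]; simp
    · rw [h]
      obtain ⟨x, y, hxy, hRxy⟩ := Finset.card_eq_two.1 h
      have hx := (memR x).1 (by simp [hRxy])
      have hy := (memR y).1 (by simp [hRxy])
      have ht := (memT _).2 (third hxy hx hy)
      set z := a - x - y
      have hsub : ({(x, y, z), (y, z, x), (z, x, y)} : Finset (F × F × F)) ⊆ T := by
        intro p hp
        simp only [Finset.mem_insert, Finset.mem_singleton] at hp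
        rcases hp with rfl | rfl | rfl
        · exact ht
        · exact rotT _ _ _ ht
        · exact rotT _ _ _ (rotT _ _ _ ht)
      have hc : ({(x, y, z), (y, z, x), (z, x, y)} : Finset (F × F × F)).card = 3 := by
        rw [Finset.card_eq_three]
        refine ⟨_, _, _, ?_, ?_, ?_, rfl⟩
        · simp [hxy]
        · intro h; simp only [Prod.mk.injEq] at h; exact hxy h.2.1.symm
        · intro h; simp only [Prod.mk.injEq] at h; exact hxy h.2.2
      have := Finset.card_le_card hsub
      simp; omega
    · rw [h]
      obtain ⟨x, y, w, hxy, hxw, hyw, hRxy⟩ := Finset.card_eq_three.1 h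
      have hx := (memR x).1 (by simp [hRxy])
      have hy := (memR y).1 (by simp [hRxy])
      have hw := (memR w).1 (by simp [hRxy])
      have ht := (memT _).2 (third hxy hx hy)
      have hz : a - x - y = w := by
        have h1 := third hxy hx hy
        simp only [sF, Prod.mk.injEq] at h1
        have h2 : (w - x) * ((w - y) * (w - (a - x - y))) = 0 := by
          linear_combination hw + w * h1.2.1 - h1.2.2
        have h3 := (mul_eq_zero.1 h2).resolve_left (sub_ne_zero.2 hxw.symm)
        have h4 := (mul_eq_zero.1 h3).resolve_left (sub_ne_zero.2 hyw.symm)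
        exact (sub_eq_zero.1 h4).symm
      rw [hz] at ht
      have hsub : ({(x, y, w), (y, w, x), (w, x, y), (y, x, w), (x, w, y), (w, y, x)} :
          Finset (F × F × F)) ⊆ T := by
        intro p hp
        simp only [Finset.mem_insert, Finset.mem_singleton] at hp
        rcases hp with rfl | rfl | rfl | rfl | rfl | rfl
        · exact ht
        · exact rotT _ _ _ ht
        · exact rotT _ _ _ (rotT _ _ _ ht)
        · exact swT _ _ _ ht
        · exact rotT _ _ _ (swT _ _ _ ht)
        · exact rotT _ _ _ (rotT _ _ _ (swT _ _ _ ht))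
      have hc : ({(x, y, w), (y, w, x), (w, x, y), (y, x, w), (x, w, y), (w, y, x)} :
          Finset (F × F × F)).card = 6 := by
        have := hxy.symm
        have := hxw.symm
        have := hyw.symm
        repeat rw [Finset.card_insert_of_notMem (by simp [*])]
        simp
      have := Finset.card_le_card hsub
      simp; omega
  · have hall : ∀ r' ∈ R, x = algebraMap F H r' := by
      intro r' hr'
      apply root_eq h3 x r'
      rw [(memS x).1 hx]; exact (memR r').1 hr'
    have hallS : ∀ x' ∈ S, x' = algebraMap F H r := by
      intro x' hx'
      apply root_eq h3 x' r
      rw [(memS x').1 hx']; exact (memR r).1 hr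
    have hR1 : R.card ≤ 1 := by
      rw [Finset.card_le_one]
      intro u hu v hv
      exact (algebraMap F H).injective ((hall u hu).symm.trans (hall v hv))
    have hS1 : S.card ≤ 1 := by
      rw [Finset.card_le_one]
      intro u hu v hv
      exact (hallS u hu).trans (hallS v hv).symm
    have hTpos : 0 < T.card := by
      refine Finset.card_pos.2 ⟨(r, r, r), ?_⟩
      rw [memT, ← (memS x).1 hx, hall r hr]
      have hf : (algebraMap F H r) ^ Nat.card F = algebraMap F H r := by rw [← map_pow, powF]
      have hf2 : (algebraMap F H r) ^ (Nat.card F ^ 2) = algebraMap F H r := by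
        rw [sq, pow_mul, hf, hf]
      have inj := (algebraMap F H).injective
      simp only [sF, sH, Prod.mk.injEq]
      refine ⟨inj ?_, inj ?_, inj ?_⟩
      · rw [trace3 h3, hf, hf2]; simp
      · rw [trace3 h3, mul_pow, hf, hf, mul_pow, hf2]; simp
      · rw [norm3 h3, hf, hf2]; simp
    omega

theorem fiber_eq (h3 : Module.finrank F H = 3) (P : F × F × F) :
    (Finset.univ.filter fun x : H => sH F x = P).card
      + 3 * (Finset.univ.filter fun p : F × F × F => sR p = P).card
    = 3 + (Finset.univ.filter fun p : F × F × F => sF p = P).card := by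
  have key := (Finset.sum_eq_sum_iff_of_le
    (s := (Finset.univ : Finset (F × F × F))) (fun P _ => fiber_le h3 P)).1 ?_
  · exact key P (Finset.mem_univ P)
  rw [Finset.sum_add_distrib, Finset.sum_add_distrib, ← Finset.mul_sum,
    ← Finset.card_eq_sum_card_fiberwise (s := (Finset.univ : Finset H)) (by simp),
    ← Finset.card_eq_sum_card_fiberwise (s := (Finset.univ : Finset (F × F × F))) (by simp),
    ← Finset.card_eq_sum_card_fiberwise (s := (Finset.univ : Finset (F × F × F))) (by simp)]
  have h : Fintype.card H = Fintype.card F ^ 3 := by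
    rw [← h3]; exact Module.card_eq_pow_finrank
  simp [h]
  ring

theorem sum_fib {α β : Type*} [Fintype α] [Fintype β] [DecidableEq β] (s : α → β) (G : β → ℂ) :
    ∑ x, G (s x) = ∑ P, ((Finset.univ.filter fun x => s x = P).card : ℂ) * G P := by
  rw [← Finset.sum_fiberwise (s := Finset.univ) (g := s)]
  refine Finset.sum_congr rfl fun P _ => ?_
  rw [Finset.sum_congr rfl (g := fun _ => G P)]
  · simp
  · intro x hx; rw [(Finset.mem_filter.1 hx).2]

theorem hasse_davenport (h3 : Module.finrank F H = 3) (ψ : AddChar F ℂ) (hψ : ψ ≠ 1)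
    (g : F → ℂ) (g0 : g 0 = 0) :
    ∑ x : H, ψ (Algebra.trace F H x) * g (Algebra.norm F x) =
      ∑ x : F, ∑ y : F, ∑ z : F, ψ x * ψ y * ψ z * g (x * y * z) := by
  set G : F × F × F → ℂ := fun P => ψ P.1 * g P.2.2 with hG
  have hs0 : ∑ a, ψ a = 0 := AddChar.sum_eq_zero_of_ne_one hψ
  have e1 : ∑ x : H, ψ (Algebra.trace F H x) * g (Algebra.norm F x) = ∑ x : H, G (sH F x) := rfl
  have e2 : ∑ x : F, ∑ y : F, ∑ z : F, ψ x * ψ y * ψ z * g (x * y * z)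
      = ∑ p : F × F × F, G (sF p) := by
    simp only [Fintype.sum_prod_type, hG, sF, AddChar.map_add_eq_mul]
  have e3 : ∑ p : F × F × F, G (sR p) = 0 := by
    simp only [Fintype.sum_prod_type, hG, sR]
    refine Finset.sum_eq_zero fun x _ => ?_
    by_cases hx : x = 0
    · simp [hx, g0]
    · have : ∀ a : F, ∑ e : F, ψ a * g (x ^ 3 - a * x ^ 2 + e * x) = ψ a * ∑ e, g e := by
        intro a
        rw [Finset.mul_sum]
        exact Fintype.sum_equiv ((Equiv.mulRight₀ x hx).trans (Equiv.addLeft (x ^ 3 - a * x ^ 2)))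
          _ _ (fun e => by simp)
      rw [Finset.sum_congr rfl (fun a _ => this a), ← Finset.sum_mul, hs0, zero_mul]
  have e4 : ∑ P : F × F × F, G P = 0 := by
    simp only [Fintype.sum_prod_type, hG]
    rw [Finset.sum_congr rfl (fun a _ => by rw [Finset.sum_congr rfl (fun b _ => (Finset.mul_sum _ _ _).symm)])]
    simp only [Finset.sum_const, ← Finset.smul_sum]
    rw [← Finset.sum_mul, hs0]; simp
  rw [e1, e2, sum_fib, sum_fib sF]
  rw [sum_fib] at e3
  have : ∀ P : F × F × F, ((Finset.univ.filter fun x : H => sH F x = P).card : ℂ) * G P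
      + 3 * (((Finset.univ.filter fun p : F × F × F => sR p = P).card : ℂ) * G P)
    = 3 * G P + ((Finset.univ.filter fun p : F × F × F => sF p = P).card : ℂ) * G P := by
    intro P
    have := congrArg (Nat.cast : ℕ → ℂ) (fiber_eq (H := H) h3 P)
    push_cast at this
    linear_combination G P * this
  have := Finset.sum_congr (rfl : (Finset.univ : Finset (F × F × F)) = _) (fun P _ => this P)
  rw [Finset.sum_add_distrib, Finset.sum_add_distrib, ← Finset.mul_sum, ← Finset.mul_sum, e3, e4]
    at this
  simpa using this

end
end HD

namespace GrpCalc
section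
open scoped Classical
set_option linter.unusedSectionVars false

variable {G U : Type*} [CommGroup G] [Fintype G] [CommGroup U] [Fintype U]

def J (ι : U →* G) (w : G) : ℂ := ∑ e : U, if w = ι e then 1 else 0

def nn (δ : G → ℂ) (m : G) : ℂ := ∑ v, δ v * δ (m * v⁻¹)

def PP (ψ δ : G → ℂ) (m : G) : ℂ := ∑ x, ψ x * δ (m * x⁻¹)

def Phi (ψ g : G → ℂ) (m : G) : ℂ :=
  ∑ x, ∑ y, ∑ z, ψ x * ψ y * ψ z * g (x * y * z * m⁻¹)

theorem sum_J (ι : U →* G) (k : G → ℂ) (a : G) :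
    ∑ x, k x * J ι (x * a) = ∑ e : U, k (ι e * a⁻¹) := by
  simp only [J, Finset.mul_sum]
  rw [Finset.sum_comm]
  refine Finset.sum_congr rfl fun e _ => ?_
  rw [Finset.sum_eq_single (ι e * a⁻¹)]
  · simp
  · intro b _ hb
    rw [if_neg, mul_zero]
    intro h
    exact hb (by rw [← h]; simp)
  · simp

theorem J_inv (ι : U →* G) (w : G) : J ι w⁻¹ = J ι w := by
  unfold J
  refine Fintype.sum_equiv (Equiv.inv U) _ _ fun e => ?_
  simp only [Equiv.inv_apply, map_inv]
  congr 1
  rw [eq_iff_iff]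
  exact inv_eq_iff_eq_inv

variable (ι : U →* G) (ψ δ : G → ℂ) (q : ℂ)

theorem Phi_delta (ha : ∀ x, ∑ e, ψ (ι e * x) = q * δ x - 1)
    (hc : ∑ x, ψ x = -1)
    (he : ∀ w, ∑ x, δ (x * w) * ψ x = q ^ 2 * J ι w - 1) (m : G) :
    Phi ψ δ m = q ^ 3 * PP ψ δ m + q ^ 2 - 1 := by
  have h1 : ∀ x y, ∑ z, ψ x * ψ y * ψ z * δ (x * y * z * m⁻¹)
      = q ^ 2 * (ψ x * (ψ y * J ι (y * (x * m⁻¹)))) - ψ x * ψ y := by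
    intro x y
    have := he (y * (x * m⁻¹))
    calc _ = ψ x * ψ y * ∑ z, δ (z * (y * (x * m⁻¹))) * ψ z := by
          rw [Finset.mul_sum]
          refine Finset.sum_congr rfl fun z _ => ?_
          rw [show x * y * z * m⁻¹ = z * (y * (x * m⁻¹)) by
            simp only [mul_comm, mul_left_comm, mul_assoc]]
          ring
      _ = _ := by rw [this]; ring
  have h2 : ∀ x, ∑ y, ψ y * J ι (y * (x * m⁻¹)) = q * δ (m * x⁻¹) - 1 := by
    intro x
    rw [sum_J, ← ha]
    simp
  unfold Phi
  simp only [h1, Finset.sum_sub_distrib, ← Finset.mul_sum, h2, hc]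
  have : ∑ x, ψ x * (q * δ (m * x⁻¹) - 1) = q * PP ψ δ m + 1 := by
    unfold PP
    rw [Finset.mul_sum]
    have : ∑ x, (ψ x * (q * δ (m * x⁻¹) - 1) + ψ x) = ∑ x, q * (ψ x * δ (m * x⁻¹)) :=
      Finset.sum_congr rfl fun x _ => by ring
    rw [Finset.sum_add_distrib, hc] at this
    linear_combination this
  rw [this, ← Finset.sum_mul, hc]
  ring

theorem PP_nn (hU : (Fintype.card U : ℂ) = q - 1)
    (ha : ∀ x, ∑ e, ψ (ι e * x) = q * δ x - 1)
    (hb : ∀ e x, δ (ι e * x) = δ x)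
    (hd : ∑ x, δ x = q ^ 2 - 1) (m : G) :
    (q - 1) * PP ψ δ m = q * nn δ m - (q ^ 2 - 1) := by
  have h1 : ∀ e : U, PP ψ δ m = ∑ x, ψ (ι e * x) * δ (m * x⁻¹) := by
    intro e
    unfold PP
    symm
    refine Fintype.sum_equiv (Equiv.mulLeft (ι e)) _ _ fun x => ?_
    simp only [Equiv.coe_mulLeft]
    congr 1
    rw [← hb e⁻¹ (m * x⁻¹), map_inv, mul_inv]
    congr 1
    simp only [mul_comm, mul_assoc]
  have h2 : ∑ x, δ (m * x⁻¹) = q ^ 2 - 1 := by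
    rw [← hd]
    exact Fintype.sum_equiv ((Equiv.inv G).trans (Equiv.mulLeft m)) _ _ fun x => by simp
  calc (q - 1) * PP ψ δ m = ∑ e : U, PP ψ δ m := by simp [hU]
    _ = ∑ e : U, ∑ x, ψ (ι e * x) * δ (m * x⁻¹) := Finset.sum_congr rfl fun e _ => h1 e
    _ = ∑ x, (q * δ x - 1) * δ (m * x⁻¹) := by
      rw [Finset.sum_comm]
      refine Finset.sum_congr rfl fun x _ => ?_
      rw [← Finset.sum_mul, ha]
    _ = _ := by
      rw [← h2, nn, Finset.mul_sum, ← Finset.sum_sub_distrib]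
      refine Finset.sum_congr rfl fun x _ => ?_
      ring

theorem Phi_nn (m : G) : Phi ψ (nn δ) m = ∑ v, δ v * Phi ψ δ (m * v) := by
  unfold Phi nn
  simp only [Finset.mul_sum]
  rw [Finset.sum_comm' (s := Finset.univ) (t := fun _ => Finset.univ) (t' := Finset.univ)
    (s' := fun _ => Finset.univ) (by simp)]
  symm
  rw [Finset.sum_comm]
  conv_rhs => rw [Finset.sum_comm]
  refine Finset.sum_congr rfl fun x _ => ?_
  rw [Finset.sum_comm]
  refine Finset.sum_congr rfl fun y _ => ?_
  rw [Finset.sum_comm]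
  refine Finset.sum_congr rfl fun z _ => ?_
  refine Finset.sum_congr rfl fun v _ => ?_
  rw [show x * y * z * (m * v)⁻¹ = x * y * z * m⁻¹ * v⁻¹ by rw [mul_inv, mul_assoc, mul_assoc, mul_assoc, mul_assoc, mul_assoc]]
  ring

theorem sum_delta_PP (hU : (Fintype.card U : ℂ) = q - 1)
    (ha : ∀ x, ∑ e, ψ (ι e * x) = q * δ x - 1)
    (hb : ∀ e x, δ (ι e * x) = δ x)
    (hc : ∑ x, ψ x = -1)
    (hd : ∑ x, δ x = q ^ 2 - 1)
    (he : ∀ w, ∑ x, δ (x * w) * ψ x = q ^ 2 * J ι w - 1) (m : G) :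
    q * ∑ v, δ v * PP ψ δ (m * v) =
      -(q ^ 2 - 1) + (q - 1) + (q - 1) * q ^ 2 * (q * δ m - 1) := by
  have hD : ∀ w, q * ∑ v, δ v * δ (v * w) = q ^ 2 - 1 + (q - 1) * (q ^ 2 * J ι w - 1) := by
    intro w
    have h1 : ∀ e : U, ∑ v, ψ (ι e * v) * δ (v * w) = q ^ 2 * J ι w - 1 := by
      intro e
      rw [← he]
      refine Fintype.sum_equiv (Equiv.mulLeft (ι e)) _ _ fun x => ?_
      simp only [Equiv.coe_mulLeft]
      rw [mul_comm, mul_assoc, hb]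
    have h2 : ∑ v, δ (v * w) = q ^ 2 - 1 := by
      rw [← hd]
      exact Fintype.sum_equiv (Equiv.mulRight w) _ _ fun x => by simp
    have h3 : ∑ e : U, ∑ v, ψ (ι e * v) * δ (v * w) = (q - 1) * (q ^ 2 * J ι w - 1) := by
      simp only [h1]; rw [Finset.sum_const, Finset.card_univ, nsmul_eq_mul, hU]
    rw [← h3, ← h2, Finset.sum_comm, Finset.mul_sum, ← Finset.sum_add_distrib]
    refine Finset.sum_congr rfl fun x _ => ?_
    rw [← Finset.sum_mul, ha]; ring
  have h4 : ∑ v, δ v * PP ψ δ (m * v) = ∑ x, ψ x * ∑ v, δ v * δ (v * (m * x⁻¹)) := by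
    simp only [PP, Finset.mul_sum]
    rw [Finset.sum_comm]
    refine Finset.sum_congr rfl fun x _ => Finset.sum_congr rfl fun v _ => ?_
    rw [show m * v * x⁻¹ = v * (m * x⁻¹) by rw [mul_comm m v, mul_assoc]]
    ring
  have h5 : ∑ x, ψ x * J ι (m * x⁻¹) = q * δ m - 1 := by
    have : ∀ x, J ι (m * x⁻¹) = J ι (x * m⁻¹) := by
      intro x; rw [← J_inv]; congr 1; simp
    simp only [this]
    rw [sum_J, ← ha]; simp
  rw [h4, Finset.mul_sum, ← h5]
  have h6 : ∀ x, q * (ψ x * ∑ v, δ v * δ (v * (m * x⁻¹))) =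
      ψ x * (q ^ 2 - 1 - (q - 1)) + (q - 1) * q ^ 2 * (ψ x * J ι (m * x⁻¹)) := by
    intro x
    linear_combination ψ x * hD (m * x⁻¹)
  simp only [h6, Finset.sum_add_distrib, ← Finset.mul_sum, ← Finset.sum_mul, hc]
  ring

theorem Phi_one (hc : ∑ x, ψ x = -1) (m : G) : Phi ψ (fun _ => 1) m = -1 := by
  unfold Phi
  simp only [mul_one, ← Finset.mul_sum, ← Finset.sum_mul, hc]
  norm_num

/-- The span of `1, δ, n` is stable under the cubic transform. -/
theorem Phi_stable (hq : q ≠ 0) (hq1 : q - 1 ≠ 0) (hU : (Fintype.card U : ℂ) = q - 1)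
    (ha : ∀ x, ∑ e, ψ (ι e * x) = q * δ x - 1)
    (hb : ∀ e x, δ (ι e * x) = δ x)
    (hc : ∑ x, ψ x = -1)
    (hd : ∑ x, δ x = q ^ 2 - 1)
    (he : ∀ w, ∑ x, δ (x * w) * ψ x = q ^ 2 * J ι w - 1)
    (a b c : ℂ) :
    ∃ a' b' c' : ℂ, ∀ m, Phi ψ (fun x => a + b * δ x + c * nn δ x) m
      = a' + b' * δ m + c' * nn δ m := by
  have lin : ∀ m, Phi ψ (fun x => a + b * δ x + c * nn δ x) m
      = a * Phi ψ (fun _ => 1) m + b * Phi ψ δ m + c * Phi ψ (nn δ) m := by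
    intro m
    simp only [Phi, Finset.mul_sum, ← Finset.sum_add_distrib]
    refine Finset.sum_congr rfl fun x _ => Finset.sum_congr rfl fun y _ =>
      Finset.sum_congr rfl fun z _ => ?_
    ring
  have hP : ∀ m, PP ψ δ m = (q * nn δ m - (q ^ 2 - 1)) / (q - 1) := by
    intro m
    rw [eq_div_iff hq1, mul_comm]
    exact PP_nn ι ψ δ q hU ha hb hd m
  have hS : ∀ m, ∑ v, δ v * PP ψ δ (m * v) =
      (-(q ^ 2 - 1) + (q - 1) + (q - 1) * q ^ 2 * (q * δ m - 1)) / q := by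
    intro m
    rw [eq_div_iff hq, mul_comm]
    exact sum_delta_PP ι ψ δ q hU ha hb hc hd he m
  have hN : ∀ m, Phi ψ (nn δ) m = q ^ 3 * ∑ v, δ v * PP ψ δ (m * v) + (q ^ 2 - 1) ^ 2 := by
    intro m
    rw [Phi_nn, sq (q ^ 2 - 1)]
    nth_rewrite 1 [← hd]
    rw [Finset.mul_sum, Finset.sum_mul, ← Finset.sum_add_distrib]
    refine Finset.sum_congr rfl fun v _ => ?_
    rw [Phi_delta ι ψ δ q ha hc he]; ring
  refine ⟨-a + b * (-(q ^ 3) * (q ^ 2 - 1) / (q - 1) + q ^ 2 - 1)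
      + c * (q ^ 3 * ((-(q ^ 2 - 1) + (q - 1) - (q - 1) * q ^ 2) / q) + (q ^ 2 - 1) ^ 2),
    c * (q ^ 3 * ((q - 1) * q ^ 2 * q / q)), b * (q ^ 3 * (q / (q - 1))), fun m => ?_⟩
  rw [lin, Phi_one ψ hc, hN, hS, Phi_delta ι ψ δ q ha hc he, hP]
  field_simp
  ring

end
end GrpCalc
namespace EFCalc
section
open scoped Classical
set_option linter.unusedSectionVars false
open GrpCalc

variable {E F : Type*} [Field E] [Fintype E] [Field F] [Fintype F] [Algebra E F]

theorem sum_units {K : Type*} [Field K] [Fintype K] (k : K → ℂ) :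
    ∑ x, k x = k 0 + ∑ x : Kˣ, k x := by
  rw [Fintype.sum_eq_add_sum_subtype_ne k 0]
  congr 1
  symm
  exact Fintype.sum_equiv unitsEquivNeZero _ _ fun x => rfl

def iota (E F : Type*) [Field E] [Field F] [Algebra E F] : Eˣ →* Fˣ :=
  Units.map (algebraMap E F : E →* F)

def psiF (F : Type*) {E : Type*} [Field E] [Field F] [Algebra E F] (ψ : AddChar E ℂ) :
    AddChar F ℂ :=
  ψ.compAddMonoidHom (Algebra.trace E F).toAddMonoidHom

theorem psiF_apply (ψ : AddChar E ℂ) (x : F) : psiF F ψ x = ψ (Algebra.trace E F x) := rfl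

theorem psiF_ne (ψ : AddChar E ℂ) (hψ : ψ ≠ 1) : psiF F ψ ≠ 1 := by
  obtain ⟨a, ha⟩ := AddChar.ne_one_iff.1 hψ
  obtain ⟨x, rfl⟩ := Algebra.trace_surjective E F a
  exact AddChar.ne_one_iff.2 ⟨x, ha⟩

def del (E : Type*) {F : Type*} [Field E] [Field F] [Algebra E F] (x : Fˣ) : ℂ :=
  if Algebra.trace E F (x : F) = 0 then 1 else 0

theorem trace_mul (e : E) (x : F) :
    Algebra.trace E F (algebraMap E F e * x) = e * Algebra.trace E F x := by
  rw [← Algebra.smul_def, map_smul, smul_eq_mul]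

theorem sumE (ψ : AddChar E ℂ) (hψ : ψ ≠ 1) (x : Fˣ) :
    ∑ e : E, psiF F ψ (algebraMap E F e * x) = (Fintype.card E : ℂ) * del E x := by
  simp only [psiF_apply, trace_mul]
  have := AddChar.sum_mulShift (Algebra.trace E F (x : F)) (AddChar.IsPrimitive.of_ne_one hψ)
  rw [this, del]
  simp

theorem fact_a (ψ : AddChar E ℂ) (hψ : ψ ≠ 1) (x : Fˣ) :
    ∑ e : Eˣ, psiF F ψ ((iota E F e * x : Fˣ) : F) = (Fintype.card E : ℂ) * del E x - 1 := by
  rw [← sumE ψ hψ, sum_units (fun e : E => psiF F ψ (algebraMap E F e * x))]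
  simp [iota]

theorem fact_b (e : Eˣ) (x : Fˣ) : del E (iota E F e * x) = del E x := by
  simp [del, iota, trace_mul]

theorem sum_psi (ψ : AddChar F ℂ) (hψ : ψ ≠ 1) (a : F) :
    ∑ x : Fˣ, ψ (x * a) = (if a = 0 then (Fintype.card F : ℂ) else 0) - 1 := by
  have := AddChar.sum_mulShift a (AddChar.IsPrimitive.of_ne_one hψ)
  rw [sum_units] at this
  simp only [zero_mul, AddChar.map_zero_eq_one] at this
  rw [eq_sub_iff_add_eq, add_comm, this]
  simp

theorem fact_c (ψ : AddChar F ℂ) (hψ : ψ ≠ 1) : ∑ x : Fˣ, ψ x = -1 := by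
  have := sum_psi ψ hψ 1
  simpa using this

theorem cardF (h3 : Module.finrank E F = 3) : (Fintype.card F : ℂ) = (Fintype.card E : ℂ) ^ 3 := by
  have h : Fintype.card F = Fintype.card E ^ 3 := by
    rw [← h3]; exact Module.card_eq_pow_finrank
  exact_mod_cast h

theorem qne : (Fintype.card E : ℂ) ≠ 0 := by exact_mod_cast Fintype.card_ne_zero

theorem fact_d (h3 : Module.finrank E F = 3) (ψ : AddChar E ℂ) (hψ : ψ ≠ 1) :
    ∑ x : Fˣ, del E x = (Fintype.card E : ℂ) ^ 2 - 1 := by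
  apply mul_left_cancel₀ (qne (E := E))
  rw [Finset.mul_sum]
  simp only [← sumE ψ hψ]
  rw [Finset.sum_comm]
  have : ∀ e : E, ∑ x : Fˣ, psiF F ψ (algebraMap E F e * x)
      = (if e = 0 then (Fintype.card F : ℂ) else 0) - 1 := by
    intro e
    have := sum_psi (psiF F ψ) (psiF_ne ψ hψ) (algebraMap E F e)
    simp only [mul_comm] at this ⊢
    rw [this]
    simp
  simp only [this, Finset.sum_sub_distrib]
  simp [cardF h3]
  ring

theorem fact_e (h3 : Module.finrank E F = 3) (ψ : AddChar E ℂ) (hψ : ψ ≠ 1) (w : Fˣ) :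
    ∑ x : Fˣ, del E (x * w) * psiF F ψ x
      = (Fintype.card E : ℂ) ^ 2 * J (iota E F) w - 1 := by
  apply mul_left_cancel₀ (qne (E := E))
  rw [Finset.mul_sum]
  simp only [← mul_assoc]
  simp only [← sumE ψ hψ]
  simp only [Finset.sum_mul]
  rw [Finset.sum_comm]
  have : ∀ e : E, ∑ x : Fˣ, psiF F ψ (algebraMap E F e * (x * w : Fˣ)) * psiF F ψ x
      = (if algebraMap E F e * w + 1 = 0 then (Fintype.card F : ℂ) else 0) - 1 := by
    intro e
    rw [← sum_psi (psiF F ψ) (psiF_ne ψ hψ) (algebraMap E F e * w + 1)]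
    refine Finset.sum_congr rfl fun x _ => ?_
    rw [← AddChar.map_add_eq_mul]
    congr 1
    push_cast
    ring
  simp only [this, Finset.sum_sub_distrib]
  rw [sum_units]
  have hJ : ∑ x : Eˣ, (if algebraMap E F x * w + 1 = 0 then (Fintype.card F : ℂ) else 0)
      = Fintype.card F * J (iota E F) w := by
    rw [J, Finset.mul_sum]
    refine Fintype.sum_equiv ((Equiv.inv Eˣ).trans (Equiv.neg Eˣ)) _ _ fun e => ?_
    have : (algebraMap E F e * w + 1 = 0) ↔ w = iota E F (-e⁻¹) := by
      rw [Units.ext_iff]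
      have he : algebraMap E F (e : E) ≠ 0 := by simp
      simp only [iota, Units.coe_map, MonoidHom.coe_coe, Units.val_neg, Units.val_inv_eq_inv_val,
        map_neg, map_inv₀]
      constructor
      · intro h
        field_simp
        linear_combination h
      · intro h
        rw [h]
        field_simp
        ring
    simp [this]
  rw [hJ, cardF h3]
  simp
  ring

theorem nn_eq (b : Fˣ) : nn (del E) b =
    ((Finset.univ.filter fun v : Fˣ => Algebra.trace E F (v : F) = 0 ∧
      Algebra.trace E F (b * (v : F)⁻¹) = 0).card : ℂ) := by
  unfold nn
  rw [Finset.card_filter]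
  push_cast
  refine Finset.sum_congr rfl fun v _ => ?_
  simp only [del, Units.val_mul, Units.val_inv_eq_inv_val]
  split_ifs <;> simp_all

theorem fixE (x : F) (hx : x ^ Nat.card E = x) : ∃ e : E, algebraMap E F e = x := by
  have h1 : (Finset.univ.image (algebraMap E F)) = Finset.univ.filter fun x : F => x ^ Nat.card E = x := by
    apply Finset.eq_of_subset_of_card_le
    · intro y hy
      obtain ⟨e, _, rfl⟩ := Finset.mem_image.1 hy
      simp only [Finset.mem_filter, Finset.mem_univ, true_and]
      rw [← map_pow, Nat.card_eq_fintype_card, FiniteField.pow_card]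
    · rw [Finset.card_image_of_injective _ (algebraMap E F).injective, Finset.card_univ,
        Nat.card_eq_fintype_card]
      have hd := FiniteField.X_pow_card_sub_X_natDegree_eq F (Fintype.one_lt_card (α := E))
      have h0 := FiniteField.X_pow_card_sub_X_ne_zero F (Fintype.one_lt_card (α := E))
      refine le_trans (Polynomial.card_le_degree_of_subset_roots
        (p := (Polynomial.X ^ Fintype.card E - Polynomial.X : Polynomial F)) ?_) hd.le
      intro y hy
      rw [Finset.mem_val, Finset.mem_filter] at hy
      rw [Polynomial.mem_roots h0]
      simp [hy.2]
  have h2 : x ∈ Finset.univ.image (algebraMap E F) := by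
    rw [h1, Finset.mem_filter]; exact ⟨Finset.mem_univ _, hx⟩
  obtain ⟨e, _, he⟩ := Finset.mem_image.1 h2
  exact ⟨e, he⟩

theorem trace_sq [CharP F 2] (h3 : Module.finrank E F = 3) (x : F) :
    Algebra.trace E F (x ^ 2) = Algebra.trace E F x ^ 2 := by
  apply (algebraMap E F).injective
  rw [map_pow (algebraMap E F), HD.trace3 h3, HD.trace3 h3, CharTwo.add_sq, CharTwo.add_sq]
  simp only [← pow_mul, mul_comm]

theorem two_zero [CharP F 2] : (2 : F) = 0 := CharTwo.two_eq_zero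

theorem quad [CharP F 2] (h3 : Module.finrank E F = 3) (b v : F) (hv : v ≠ 0)
    (h1 : Algebra.trace E F v = 0) (h2 : Algebra.trace E F (b * v⁻¹) = 0) :
    b * (v ^ Nat.card E) ^ 2 + algebraMap E F (Algebra.trace E F b) * v * v ^ Nat.card E
      + b ^ Nat.card E * v ^ 2 = 0 := by
  have h1' := HD.trace3 h3 v
  have h2' := HD.trace3 h3 (b * v⁻¹)
  rw [h1, map_zero] at h1'
  rw [h2, map_zero, mul_pow, mul_pow, inv_pow, inv_pow] at h2'
  rw [HD.trace3 h3 b]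
  have hv1 : v ^ Nat.card E ≠ 0 := pow_ne_zero _ hv
  have hv2 : v ^ (Nat.card E ^ 2) ≠ 0 := pow_ne_zero _ hv
  generalize v ^ Nat.card E = v1 at *
  generalize v ^ (Nat.card E ^ 2) = v2 at *
  generalize b ^ Nat.card E = b1 at *
  generalize b ^ (Nat.card E ^ 2) = b2 at *
  have h4 : b * v1 * v2 + b1 * v * v2 + b2 * v * v1 = 0 := by
    field_simp at h2'
    linear_combination -h2'
  have h2z := two_zero (F := F)
  linear_combination -h4 - (b * v1 + b1 * v) * h1' + b2 * v * v1 * h2z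

theorem two_cases [CharP F 2] (h3 : Module.finrank E F = 3) (b v v' : F) (hb : b ≠ 0)
    (hv : v ≠ 0) (hv' : v' ≠ 0)
    (h1 : Algebra.trace E F v = 0) (h2 : Algebra.trace E F (b * v⁻¹) = 0)
    (h1' : Algebra.trace E F v' = 0) (h2' : Algebra.trace E F (b * v'⁻¹) = 0) :
    (∃ e : E, v' = algebraMap E F e * v) ∨ (∃ e : E, v' = algebraMap E F e * (b * v⁻¹)) := by
  have k1 := quad h3 b v hv h1 h2
  have k2 := quad h3 b v' hv' h1' h2'
  have h2z := two_zero (F := F)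
  generalize algebraMap E F (Algebra.trace E F b) = T at *
  have hv1 : v ^ Nat.card E ≠ 0 := pow_ne_zero _ hv
  have hb1 : b ^ Nat.card E ≠ 0 := pow_ne_zero _ hb
  obtain ⟨v1, hv1e⟩ : ∃ y, y = v ^ Nat.card E := ⟨_, rfl⟩
  obtain ⟨w1, hw1e⟩ : ∃ y, y = v' ^ Nat.card E := ⟨_, rfl⟩
  obtain ⟨b1, hb1e⟩ : ∃ y, y = b ^ Nat.card E := ⟨_, rfl⟩
  rw [← hv1e] at k1 hv1
  rw [← hw1e] at k2
  rw [← hb1e] at k1 k2 hb1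
  have hD : (v1 * v' + w1 * v) * (b * (v1 * v' + w1 * v) + T * v * v') = 0 := by
    linear_combination v' ^ 2 * k1 + v ^ 2 * k2
      + (b * v1 * v' * w1 * v - b1 * v ^ 2 * v' ^ 2) * h2z
  rcases mul_eq_zero.1 hD with h | h
  · left
    obtain ⟨e, he⟩ := fixE (E := E) (v' * v⁻¹) (by
      rw [mul_pow, inv_pow, ← hv1e, ← hw1e]
      field_simp
      linear_combination h - v' * v1 * h2z)
    exact ⟨e, by rw [he]; field_simp⟩
  · right
    have h5 : v * (b1 * v * v' - b * v1 * w1) = 0 := by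
      linear_combination v' * k1 - v1 * h
    have h6 := (mul_eq_zero.1 h5).resolve_left hv
    obtain ⟨e, he⟩ := fixE (E := E) (v * v' * b⁻¹) (by
      rw [mul_pow, mul_pow, inv_pow, ← hv1e, ← hw1e, ← hb1e]
      field_simp
      linear_combination -h6)
    exact ⟨e, by rw [he]; field_simp⟩

def VV (E : Type*) {F : Type*} [Field E] [Field F] [Fintype F] [Algebra E F] (b : Fˣ) :
    Finset Fˣ :=
  Finset.univ.filter fun v : Fˣ => Algebra.trace E F (v : F) = 0 ∧
      Algebra.trace E F (b * (v : F)⁻¹) = 0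

theorem mem_VV (b v : Fˣ) : v ∈ VV E b ↔ Algebra.trace E F (v : F) = 0 ∧
      Algebra.trace E F (b * (v : F)⁻¹) = 0 := by simp [VV]

def orb (E : Type*) {F : Type*} [Field E] [Fintype E] [Field F] [Algebra E F] (v : Fˣ) :
    Finset Fˣ := Finset.univ.image fun e : Eˣ => iota E F e * v

theorem card_orb (v : Fˣ) : (orb E v).card = Fintype.card E - 1 := by
  rw [orb, Finset.card_image_of_injective, Finset.card_univ, Fintype.card_units]
  intro e e' h
  have h' : iota E F e = iota E F e' := mul_right_cancel h
  rw [Units.ext_iff] at h' ⊢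
  exact (algebraMap E F).injective h'

theorem orb_sub (b v : Fˣ) (hv : v ∈ VV E b) : orb E v ⊆ VV E b := by
  intro w hw
  obtain ⟨e, _, rfl⟩ := Finset.mem_image.1 hw
  rw [mem_VV] at hv ⊢
  have h : (b : F) * ((iota E F e * v : Fˣ) : F)⁻¹
      = algebraMap E F (e : E)⁻¹ * (b * (v : F)⁻¹) := by
    simp [iota]; ring
  rw [h, trace_mul, hv.2]
  simp [iota, trace_mul, hv.1]

theorem inv_mem (b v : Fˣ) (hv : v ∈ VV E b) : b * v⁻¹ ∈ VV E b := by
  rw [mem_VV] at hv ⊢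
  refine ⟨by simpa using hv.2, ?_⟩
  have : (b : F) * ((b * v⁻¹ : Fˣ) : F)⁻¹ = v := by
    rw [← Units.val_inv_eq_inv_val, ← Units.val_mul]; simp
  rw [this]; exact hv.1

theorem VV_eq [CharP F 2] (h3 : Module.finrank E F = 3) (b v : Fˣ) (hv : v ∈ VV E b) :
    VV E b = orb E v ∪ orb E (b * v⁻¹) := by
  apply Finset.Subset.antisymm
  · intro w hw
    rw [mem_VV] at hv hw
    rw [Finset.mem_union]
    rcases two_cases h3 (b : F) v w b.ne_zero v.ne_zero w.ne_zero hv.1 hv.2 hw.1 hw.2 with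
      ⟨e, he⟩ | ⟨e, he⟩
    · left
      have he0 : e ≠ 0 := by rintro rfl; simp at he
      exact Finset.mem_image.2 ⟨Units.mk0 e he0, Finset.mem_univ _, by
        rw [Units.ext_iff, he]; simp [iota]⟩
    · right
      have he0 : e ≠ 0 := by rintro rfl; simp at he
      exact Finset.mem_image.2 ⟨Units.mk0 e he0, Finset.mem_univ _, by
        rw [Units.ext_iff, he]; simp [iota]⟩
  · exact Finset.union_subset (orb_sub b v hv) (orb_sub b _ (inv_mem b v hv))

theorem tri_zero [CharP F 2] (h3 : Module.finrank E F = 3) (b : Fˣ)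
    (hb : Algebra.trace E F (b : F) = 0) : (VV E b).card = Fintype.card E - 1 := by
  obtain ⟨r, hr⟩ := FiniteField.isSquare_of_char_two (ringChar.eq F 2) (b : F)
  have hr0 : r ≠ 0 := by rintro rfl; simp at hr
  have hr' : b = Units.mk0 r hr0 * Units.mk0 r hr0 := by rw [Units.ext_iff, hr]; simp
  have htr : Algebra.trace E F r = 0 := by
    rw [hr, ← sq, trace_sq h3] at hb
    exact pow_eq_zero_iff (two_ne_zero) |>.1 hb
  have hv : Units.mk0 r hr0 ∈ VV E b := by
    rw [mem_VV, hr]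
    simp [htr, hr0]
  rw [VV_eq h3 b _ hv]
  rw [show b * (Units.mk0 r hr0)⁻¹ = Units.mk0 r hr0 by rw [hr']; simp, Finset.union_idempotent,
    card_orb]

theorem tri_ne [CharP F 2] (h3 : Module.finrank E F = 3) (b : Fˣ)
    (hb : Algebra.trace E F (b : F) ≠ 0) :
    (VV E b).card = 0 ∨ (VV E b).card = 2 * (Fintype.card E - 1) := by
  rcases (VV E b).eq_empty_or_nonempty with h | ⟨v, hv⟩
  · left; rw [h]; simp
  right
  rw [VV_eq h3 b v hv, Finset.card_union_of_disjoint, card_orb, card_orb, two_mul]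
  rw [Finset.disjoint_left]
  intro w h1 h2
  obtain ⟨e, _, rfl⟩ := Finset.mem_image.1 h1
  obtain ⟨e', _, h⟩ := Finset.mem_image.1 h2
  apply hb
  have : b = iota E F (e * e'⁻¹) * (v * v) := by
    rw [map_mul, map_inv]
    have h' : iota E F e' * b = iota E F e * v * v := by rw [← h]; simp [mul_assoc]
    rw [eq_comm, mul_right_comm, mul_inv_eq_iff_eq_mul, ← mul_assoc, ← h', mul_comm]
  rw [this]
  have hh : ((iota E F (e * e'⁻¹) * (v * v) : Fˣ) : F)
    = algebraMap E F ((e * e'⁻¹ : Eˣ) : E) * (v : F) ^ 2 := by rw [sq]; rfl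
  rw [hh, trace_mul, trace_sq h3, ((mem_VV b v).1 hv).1]
  simp

end
end EFCalc
namespace Core
section
open scoped Classical
set_option linter.unusedSectionVars false
open GrpCalc EFCalc

variable {E F H : Type*} [Field E] [Fintype E] [Field F] [Fintype F] [Field H] [Fintype H]
  [Algebra E F] [Algebra F H]

def normU (F : Type*) {H : Type*} [Field F] [Field H] [Algebra F H] : Hˣ →* Fˣ :=
  Units.map (Algebra.norm F)

/-- the class invariant -/
def cl (E F : Type*) {H : Type*} [Field E] [Field F] [Fintype F] [Field H]
    [Algebra E F] [Algebra F H] (x : Hˣ) : ℕ := (VV E (normU F x)).card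

def InA (E F : Type*) {H : Type*} [Field E] [Field F] [Fintype F] [Field H]
    [Algebra E F] [Algebra F H] (g : H → ℂ) : Prop :=
  ∀ x y : Hˣ, cl E F x = cl E F y → g x = g y

theorem one_lt_cardE : 1 < Fintype.card E := Fintype.one_lt_card

theorem del_eq [CharP F 2] (h3 : Module.finrank E F = 3) (b : Fˣ) :
    del E b = if (VV E b).card = Fintype.card E - 1 then 1 else 0 := by
  have h1 := one_lt_cardE (E := E)
  unfold del
  by_cases hb : Algebra.trace E F (b : F) = 0
  · rw [if_pos hb, if_pos (tri_zero h3 b hb)]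
  · rw [if_neg hb, if_neg]
    rcases tri_ne h3 b hb with h | h <;> omega

theorem tri [CharP F 2] (h3 : Module.finrank E F = 3) (b : Fˣ) :
    (VV E b).card = Fintype.card E - 1 ∨ (VV E b).card = 2 * (Fintype.card E - 1) ∨
    (VV E b).card = 0 := by
  by_cases hb : Algebra.trace E F (b : F) = 0
  · exact Or.inl (tri_zero h3 b hb)
  · rcases tri_ne h3 b hb with h | h
    · exact Or.inr (Or.inr h)
    · exact Or.inr (Or.inl h)

theorem nn_card (b : Fˣ) : nn (del E) b = ((VV E b).card : ℂ) := nn_eq b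

theorem InA_iff [CharP F 2] (h3 : Module.finrank E F = 3) (g : H → ℂ) :
    InA E F g ↔ ∃ a b c : ℂ, ∀ x : Hˣ,
      g x = a + b * del E (normU F x) + c * nn (del E) (normU F x) := by
  constructor
  · intro hg
    have h1 := one_lt_cardE (E := E)
    obtain ⟨φ, hφ⟩ : ∃ φ : ℕ → ℂ, ∀ x : Hˣ, g x = φ (cl E F x) := by
      refine ⟨fun n => if h : ∃ x : Hˣ, cl E F x = n then g h.choose else 0, fun x => ?_⟩
      have h : ∃ y : Hˣ, cl E F y = cl E F x := ⟨x, rfl⟩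
      beta_reduce
      rw [dif_pos h]
      exact hg _ _ h.choose_spec.symm
    obtain ⟨r, hr⟩ : ∃ r, r = Fintype.card E - 1 := ⟨_, rfl⟩
    have hr0 : (r : ℂ) ≠ 0 := by
      have : r ≠ 0 := by omega
      exact_mod_cast this
    refine ⟨φ 0, φ r - φ 0 - (φ (2 * r) - φ 0) / (2 * r) * r, (φ (2 * r) - φ 0) / (2 * r),
      fun x => ?_⟩
    rw [hφ, del_eq h3, nn_card]
    change φ (VV E (normU F x)).card = _
    have := tri h3 (normU F x)
    rw [← hr] at this ⊢
    rcases this with h | h | h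
    · rw [h, if_pos rfl]; ring
    · rw [h, if_neg (by omega)]; push_cast; field_simp; ring
    · rw [h, if_neg (by omega)]; simp
  · rintro ⟨a, b, c, h⟩ x y hxy
    rw [h, h, del_eq h3, del_eq h3, nn_card, nn_card]
    unfold cl at hxy
    rw [hxy]

def hat (ψ : AddChar H ℂ) (g : H → ℂ) (b : H) : ℂ := ∑ x, g x * ψ (b * x)

theorem sum3_units (ψ : AddChar F ℂ) (g : F → ℂ) (g0 : g 0 = 0) :
    ∑ x : F, ∑ y : F, ∑ z : F, ψ x * ψ y * ψ z * g (x * y * z)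
      = ∑ x : Fˣ, ∑ y : Fˣ, ∑ z : Fˣ, ψ x * ψ y * ψ z * g (x * y * z) := by
  rw [sum_units]
  simp only [zero_mul, g0, mul_zero, Finset.sum_const_zero, zero_add]
  refine Finset.sum_congr rfl fun x _ => ?_
  rw [sum_units]
  simp only [zero_mul, g0, mul_zero, Finset.sum_const_zero, zero_add]
  refine Finset.sum_congr rfl fun y _ => ?_
  rw [sum_units]
  simp only [g0, mul_zero, zero_add]

theorem hat_stable [CharP F 2] (h3 : Module.finrank E F = 3) (h3' : Module.finrank F H = 3)
    (ψ : AddChar E ℂ) (hψ : ψ ≠ 1) (g : H → ℂ) (hg : InA E F g) :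
    InA E F (hat (psiF H (psiF F ψ)) g) := by
  rw [InA_iff h3] at hg ⊢
  obtain ⟨a, b, c, hg⟩ := hg
  have hq1 : (Fintype.card E : ℂ) - 1 ≠ 0 := by
    have := one_lt_cardE (E := E)
    rw [sub_ne_zero]
    exact_mod_cast this.ne'
  have hU : (Fintype.card Eˣ : ℂ) = (Fintype.card E : ℂ) - 1 := by
    rw [Fintype.card_units, Nat.cast_sub (one_lt_cardE (E := E)).le]; simp
  obtain ⟨a', b', c', h⟩ := Phi_stable (iota E F) (fun x : Fˣ => psiF F ψ x) (del E)
    (Fintype.card E : ℂ) qne hq1 hU (fun x => fact_a ψ hψ x) fact_b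
    (fact_c (psiF F ψ) (psiF_ne ψ hψ)) (fact_d h3 ψ hψ) (fact_e h3 ψ hψ) a b c
  refine ⟨g 0 + a', b', c', fun m => ?_⟩
  have h' := h (normU F m)
  set G : Fˣ → ℂ := fun x => a + b * del E x + c * nn (del E) x with hG
  rw [add_assoc, add_assoc, ← add_assoc a', ← h']
  unfold hat
  rw [sum_units]
  simp only [mul_zero, AddChar.map_zero_eq_one, mul_one]
  congr 1
  set g' : F → ℂ := fun y => if h : y = 0 then 0 else G (Units.mk0 y h * (normU F m)⁻¹) with hg'
  have g0 : g' 0 = 0 := by simp [hg']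
  have gu : ∀ y : Fˣ, g' y = G (y * (normU F m)⁻¹) := by
    intro y
    simp [hg']
  have hd := HD.hasse_davenport (H := H) h3' (psiF F ψ) (psiF_ne ψ hψ) g' g0
  rw [sum3_units _ _ g0, sum_units] at hd
  rw [Algebra.norm_zero, g0, mul_zero, zero_add] at hd
  have e1 : Phi (fun x : Fˣ => psiF F ψ x) G (normU F m) =
      ∑ x : Fˣ, ∑ y : Fˣ, ∑ z : Fˣ, psiF F ψ x * psiF F ψ y * psiF F ψ z * g' (x * y * z) := by
    unfold Phi
    refine Finset.sum_congr rfl fun x _ => Finset.sum_congr rfl fun y _ =>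
      Finset.sum_congr rfl fun z _ => ?_
    rw [← gu]
    simp
  rw [e1, ← hd]
  refine Fintype.sum_equiv (Equiv.mulLeft m) _ _ fun x => ?_
  have e2 : Algebra.norm F (((Equiv.mulLeft m) x : Hˣ) : H) = ((normU F (m * x) : Fˣ) : F) := rfl
  have e3 : normU F (m * x) * (normU F m)⁻¹ = normU F x := by
    rw [map_mul (normU F), mul_comm (normU F m), mul_assoc, mul_inv_cancel, mul_one]
  rw [e2, gu, e3, hg x, mul_comm]
  rfl

theorem hat_hat [CharP H 2] (ψ : AddChar H ℂ) (hψ : ψ ≠ 1) (g : H → ℂ) (x : H) :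
    hat ψ (hat ψ g) x = Fintype.card H * g x := by
  unfold hat
  simp only [Finset.sum_mul]
  rw [Finset.sum_comm]
  have : ∀ y : H, ∑ b : H, g y * ψ (b * y) * ψ (x * b) =
      g y * if y + x = 0 then (Fintype.card H : ℂ) else 0 := by
    intro y
    have h := AddChar.sum_mulShift (y + x) (AddChar.IsPrimitive.of_ne_one hψ)
    push_cast at h
    rw [← h, Finset.mul_sum]
    refine Finset.sum_congr rfl fun b _ => ?_
    rw [mul_assoc, ← AddChar.map_add_eq_mul]
    congr 2
    ring
  simp only [this]
  rw [Finset.sum_eq_single x]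
  · rw [if_pos (CharTwo.add_self_eq_zero x), mul_comm]
  · intro y _ hy
    rw [if_neg, mul_zero]
    rwa [CharTwo.add_eq_zero]
  · simp

def conv (u v : H → ℂ) (d : H) : ℂ := ∑ z, u z * v (d + z)

theorem hat_conv [CharP H 2] (ψ : AddChar H ℂ) (u v : H → ℂ) (b : H) :
    hat ψ (conv u v) b = hat ψ u b * hat ψ v b := by
  unfold hat conv
  simp only [Finset.sum_mul]
  rw [Finset.sum_comm]
  refine Finset.sum_congr rfl fun z _ => ?_
  rw [Finset.mul_sum]
  refine Fintype.sum_equiv (Equiv.addRight z) _ _ fun d => ?_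
  simp only [Equiv.coe_addRight]
  have : b * d = b * z + b * (d + z) := by
    rw [mul_add, add_left_comm, CharTwo.add_self_eq_zero, add_zero]
  rw [this, AddChar.map_add_eq_mul]
  ring

theorem conv_stable [CharP F 2] [CharP H 2] (h3 : Module.finrank E F = 3)
    (h3' : Module.finrank F H = 3) (u v : H → ℂ) (hu : InA E F u) (hv : InA E F v) :
    InA E F (conv u v) := by
  obtain ⟨ψ, hψ⟩ := (AddChar.exists_apply_ne_zero (a := (1 : E))).2 one_ne_zero
  have hψ : ψ ≠ 1 := AddChar.ne_one_iff.2 ⟨1, hψ⟩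
  have hψH : psiF H (psiF F ψ) ≠ 1 := psiF_ne _ (psiF_ne ψ hψ)
  have k1 := hat_stable h3 h3' ψ hψ u hu
  have k2 := hat_stable h3 h3' ψ hψ v hv
  have k3 : InA E F (hat (psiF H (psiF F ψ)) (conv u v)) := by
    intro x y hxy
    rw [hat_conv, hat_conv, k1 x y hxy, k2 x y hxy]
  have k4 := hat_stable h3 h3' ψ hψ _ k3
  intro x y hxy
  have := k4 x y hxy
  rw [hat_hat _ hψH, hat_hat _ hψH] at this
  exact mul_left_cancel₀ (by exact_mod_cast Fintype.card_ne_zero) this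

/-- scaling invariance -/
theorem VV_scale (e : Eˣ) (b : Fˣ) : VV E (iota E F e * b) = VV E b := by
  ext v
  rw [mem_VV, mem_VV]
  have : ((iota E F e * b : Fˣ) : F) * (v : F)⁻¹ = algebraMap E F (e : E) * (b * (v : F)⁻¹) := by
    simp [iota]; ring
  rw [this, trace_mul]
  simp

end
end Core

namespace Asm
section
open scoped Classical
set_option linter.unusedSectionVars false
open GrpCalc EFCalc Core

variable {E F H : Type*} [Field E] [Fintype E] [Field F] [Fintype F] [Field H] [Fintype H]
  [Algebra E F] [Algebra F H]

theorem trFE_eq (h3 : Module.finrank E F = 3) {s : ℕ} (hE : Nat.card E = 2 ^ s) (y : F) :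
    trFE s y = algebraMap E F (Algebra.trace E F y) := by
  rw [HD.trace3 h3, hE, trFE, ← pow_mul, mul_comm s 2]

theorem trFE_zero (h3 : Module.finrank E F = 3) {s : ℕ} (hE : Nat.card E = 2 ^ s) (y : F) :
    trFE s y = 0 ↔ Algebra.trace E F y = 0 := by
  rw [trFE_eq h3 hE, map_eq_zero]

theorem trFE_inv (h3 : Module.finrank E F = 3) {s : ℕ} (hE : Nat.card E = 2 ^ s) (u : F)
    (hu : u ≠ 0) :
    trFE s (u ^ (2 ^ s + 1)) = 0 ↔ trFE s u⁻¹ = 0 := by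
  have h := HD.pow3 h3 u
  rw [hE] at h
  have e : trFE s (u ^ (2 ^ s + 1)) = u * u ^ (2 ^ s) * u ^ (2 ^ (2 * s)) * trFE s u⁻¹ := by
    unfold trFE
    have e2 : 2 ^ (2 * s) = (2 ^ s) ^ 2 := by rw [← pow_mul, mul_comm s 2]
    rw [e2]
    generalize 2 ^ s = q at *
    have h1 : (u ^ (q + 1)) ^ q = u ^ (q ^ 2) * u ^ q := by
      rw [← pow_mul, ← pow_add]; congr 1; ring
    have h2 : (u ^ (q + 1)) ^ (q ^ 2) = u * u ^ (q ^ 2) := by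
      rw [← pow_mul]
      have : (q + 1) * q ^ 2 = q ^ 3 + q ^ 2 := by ring
      rw [this, pow_add, h]
    rw [h1, h2, pow_succ, inv_pow, inv_pow]
    field_simp
    ring
  rw [e]
  simp [hu]

theorem Sa_ncard (h3 : Module.finrank E F = 3) {s : ℕ} (hE : Nat.card E = 2 ^ s) (ωu : Fˣ)
    (n : ℤ) : (Sa s (ωu : F) n).ncard = (VV E (ωu ^ n)).card := by
  have : Sa s (ωu : F) n = (fun v : Fˣ => ((v⁻¹ : Fˣ) : F)) '' (VV E (ωu ^ n) : Set Fˣ) := by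
    ext u
    simp only [Sa, Set.mem_setOf_eq, Set.mem_image, Finset.mem_coe, mem_VV]
    constructor
    · rintro ⟨hu, h1, h2⟩
      refine ⟨(Units.mk0 u hu)⁻¹, ⟨?_, ?_⟩, by simp⟩
      · rw [trFE_inv h3 hE u hu, trFE_zero h3 hE] at h1
        simpa using h1
      · rw [trFE_zero h3 hE] at h2
        simpa using h2
    · rintro ⟨v, ⟨h1, h2⟩, rfl⟩
      refine ⟨Units.ne_zero _, ?_, ?_⟩
      · rw [trFE_inv h3 hE _ (Units.ne_zero _), trFE_zero h3 hE]
        simpa using h1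
      · rw [trFE_zero h3 hE]
        simpa using h2
  rw [this, Set.ncard_image_of_injective, Set.ncard_coe_finset]
  intro a b hab
  exact inv_injective (Units.ext hab)

theorem omega_M (h3 : Module.finrank E F = 3) {s : ℕ} (hE : Nat.card E = 2 ^ s) (ωu : Fˣ) :
    ∃ e : Eˣ, iota E F e = ωu ^ Mof s := by
  have h := HD.pow3 h3 (ωu : F)
  rw [hE] at h
  obtain ⟨e, he⟩ := fixE (E := E) ((ωu : F) ^ Mof s) (by
    rw [hE, ← pow_mul]
    have : Mof s * 2 ^ s = (2 ^ s) ^ 3 + (2 ^ (2 * s) + 2 ^ s) := by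
      unfold Mof
      rw [mul_comm 2 s, pow_mul]; ring
    rw [this, pow_add, h, ← pow_succ'])
  have he0 : e ≠ 0 := by
    rintro rfl
    rw [map_zero] at he
    exact pow_ne_zero _ (Units.ne_zero ωu) he.symm
  exact ⟨Units.mk0 e he0, Units.ext (by simpa [iota] using he)⟩

theorem VV_shift (h3 : Module.finrank E F = 3) {s : ℕ} (hE : Nat.card E = 2 ^ s) (ωu : Fˣ)
    (i t : ℤ) : VV E (ωu ^ (i + (Mof s : ℤ) * t)) = VV E (ωu ^ i) := by
  obtain ⟨e, he⟩ := omega_M h3 hE ωu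
  rw [zpow_add, zpow_mul, zpow_natCast, ← he, ← map_zpow, mul_comm, VV_scale]

theorem mem_Rclass (h3 : Module.finrank E F = 3) {s : ℕ} (hE : Nat.card E = 2 ^ s) (βu : Hˣ)
    (hβ : ∀ x : H, x ≠ 0 → ∃ n : ℕ, x = (βu : H) ^ n) (ωu : Fˣ) (hN : normU F βu = ωu)
    (c : ℕ) (x : H) :
    x ∈ Rclass s (βu : H) {i | (Sa s (ωu : F) (i.val : ℤ)).ncard = c} ↔
      ∃ u : Hˣ, x = u ∧ cl E F u = c := by
  simp only [Rclass, cyc, Set.mem_iUnion, Set.mem_setOf_eq, exists_prop, Sa_ncard h3 hE]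
  constructor
  · rintro ⟨i, hi, t, rfl⟩
    refine ⟨βu ^ ((i.val : ℤ) + (Mof s : ℤ) * t), by simp, ?_⟩
    unfold cl
    rw [map_zpow, hN, VV_shift h3 hE, hi]
  · rintro ⟨u, rfl, hu⟩
    obtain ⟨n, hn⟩ := hβ u (Units.ne_zero u)
    have hn' : u = βu ^ n := Units.ext (by simpa using hn)
    have hnn : (n : ℤ) = ((n : ZMod (Mof s)).val : ℤ) + (Mof s : ℤ) * ((n / Mof s : ℕ) : ℤ) := by
      rw [ZMod.val_natCast]
      exact_mod_cast (Nat.mod_add_div n (Mof s)).symm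
    refine ⟨(n : ZMod (Mof s)), ?_, ((n / Mof s : ℕ) : ℤ), ?_⟩
    · rw [← hu, hn']
      unfold cl
      rw [map_pow, hN, ← zpow_natCast ωu n, hnn, VV_shift h3 hE]
    · rw [← hnn, hn]; simp

/-- The value of the class invariant on `R_k`. -/
def val (q : ℕ) : Fin 4 → ℕ := ![0, q - 1, 2 * (q - 1), 0]

theorem mem_Rfam (h3 : Module.finrank E F = 3) {s : ℕ} (hE : Nat.card E = 2 ^ s) (βu : Hˣ)
    (hβ : ∀ x : H, x ≠ 0 → ∃ n : ℕ, x = (βu : H) ^ n) (ωu : Fˣ) (hN : normU F βu = ωu)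
    (k : Fin 4) (x : H) :
    x ∈ Rfam s (ωu : F) (βu : H) k ↔
      (k = 0 ∧ x = 0) ∨ (k ≠ 0 ∧ ∃ u : Hˣ, x = u ∧ cl E F u = val (2 ^ s) k) := by
  have h := mem_Rclass h3 hE βu hβ ωu hN
  fin_cases k
  · simp [Rfam]
  · refine (h (2 ^ s - 1) x).trans ⟨fun h' => Or.inr ⟨by decide, h'⟩, ?_⟩
    rintro (⟨h', -⟩ | ⟨-, h'⟩)
    · exact absurd h' (by decide)
    · exact h'
  · refine (h (2 * (2 ^ s - 1)) x).trans ⟨fun h' => Or.inr ⟨by decide, h'⟩, ?_⟩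
    rintro (⟨h', -⟩ | ⟨-, h'⟩)
    · exact absurd h' (by decide)
    · exact h'
  · refine (h 0 x).trans ⟨fun h' => Or.inr ⟨by decide, h'⟩, ?_⟩
    rintro (⟨h', -⟩ | ⟨-, h'⟩)
    · exact absurd h' (by decide)
    · exact h'

theorem mid [CharP F 2] [CharP H 2] (h3 : Module.finrank E F = 3) (h3' : Module.finrank F H = 3)
    {s : ℕ} (hs : 1 ≤ s) (hE : Nat.card E = 2 ^ s) (βu : Hˣ)
    (hβ : ∀ x : H, x ≠ 0 → ∃ n : ℕ, x = (βu : H) ^ n) (ωu : Fˣ) (hN : normU F βu = ωu) :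
    (∀ x : H, ∃! k : Fin 4, x ∈ Rfam s (ωu : F) (βu : H) k) ∧
    ∃ p : Fin 4 → Fin 4 → Fin 4 → ℕ,
      ∀ k l m : Fin 4, ∀ d ∈ Rfam s (ωu : F) (βu : H) m,
        {z : H | z ∈ Rfam s (ωu : F) (βu : H) k ∧ d + z ∈ Rfam s (ωu : F) (βu : H) l}.ncard
          = p k l m := by
  have hR := mem_Rfam h3 hE βu hβ ωu hN
  have hq : 2 ≤ 2 ^ s := by
    calc 2 = 2 ^ 1 := rfl
      _ ≤ 2 ^ s := Nat.pow_le_pow_right (by norm_num) hs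
  have hcE : Fintype.card E = 2 ^ s := by rw [← Nat.card_eq_fintype_card, hE]
  refine ⟨fun x => ?_, ?_⟩
  · simp only [hR]
    by_cases hx : x = 0
    · refine ⟨0, Or.inl ⟨rfl, hx⟩, ?_⟩
      rintro k (⟨h, -⟩ | ⟨-, u, h, -⟩)
      · exact h
      · exact absurd (h.symm.trans hx) (Units.ne_zero u)
    · have ht := tri h3 (normU F (Units.mk0 x hx))
      rw [hcE] at ht
      change cl E F (Units.mk0 x hx) = _ ∨ cl E F (Units.mk0 x hx) = _ ∨
        cl E F (Units.mk0 x hx) = _ at ht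
      obtain ⟨k, hk0, hk⟩ : ∃ k : Fin 4, k ≠ 0 ∧ cl E F (Units.mk0 x hx) = val (2 ^ s) k := by
        rcases ht with h | h | h
        · exact ⟨1, by decide, h⟩
        · exact ⟨2, by decide, h⟩
        · exact ⟨3, by decide, h⟩
      refine ⟨k, Or.inr ⟨hk0, Units.mk0 x hx, rfl, hk⟩, ?_⟩
      rintro l (⟨-, h⟩ | ⟨hl0, u, h, hl⟩)
      · exact absurd h hx
      · have : u = Units.mk0 x hx := Units.ext h.symm
        rw [this, hk] at hl
        revert hk0 hl0 hl
        generalize 2 ^ s = q at hq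
        clear hk
        fin_cases k <;> fin_cases l <;> simp [val] <;> omega
  · have hind : ∀ k, InA E F
        (fun z : H => if z ∈ Rfam s (ωu : F) (βu : H) k then (1 : ℂ) else 0) := by
      intro k x y hxy
      have hm : ∀ u : Hˣ, (u : H) ∈ Rfam s (ωu : F) (βu : H) k ↔
          k ≠ 0 ∧ cl E F u = val (2 ^ s) k := by
        intro u
        rw [hR]
        constructor
        · rintro (⟨-, h⟩ | ⟨h0, w, h, h'⟩)
          · exact absurd h (Units.ne_zero u)
          · rw [Units.ext h]; exact ⟨h0, h'⟩
        · rintro ⟨h0, h⟩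
          exact Or.inr ⟨h0, u, rfl, h⟩
      simp only [hm, hxy]
    have hcount : ∀ k l d, (({z : H | z ∈ Rfam s (ωu : F) (βu : H) k ∧
        d + z ∈ Rfam s (ωu : F) (βu : H) l}.ncard : ℕ) : ℂ) =
        conv (fun z : H => if z ∈ Rfam s (ωu : F) (βu : H) k then (1 : ℂ) else 0)
          (fun z : H => if z ∈ Rfam s (ωu : F) (βu : H) l then (1 : ℂ) else 0) d := by
      intro k l d
      unfold conv
      rw [Set.ncard_eq_toFinset_card', Set.toFinset_setOf, Finset.card_filter]
      push_cast
      refine Finset.sum_congr rfl fun z _ => ?_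
      by_cases h1 : z ∈ Rfam s (ωu : F) (βu : H) k <;> simp [h1]
    have key : ∀ k l m d d', d ∈ Rfam s (ωu : F) (βu : H) m → d' ∈ Rfam s (ωu : F) (βu : H) m →
        {z : H | z ∈ Rfam s (ωu : F) (βu : H) k ∧ d + z ∈ Rfam s (ωu : F) (βu : H) l}.ncard =
        {z : H | z ∈ Rfam s (ωu : F) (βu : H) k ∧ d' + z ∈ Rfam s (ωu : F) (βu : H) l}.ncard := by
      intro k l m d d' hd hd'
      rw [hR] at hd hd'
      rcases hd with ⟨hm, rfl⟩ | ⟨hm, u, rfl, hu⟩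
      · rcases hd' with ⟨-, rfl⟩ | ⟨hm', -⟩
        · rfl
        · exact absurd hm hm'
      · rcases hd' with ⟨hm', -⟩ | ⟨-, u', rfl, hu'⟩
        · exact absurd hm' hm
        · have := conv_stable h3 h3' _ _ (hind k) (hind l) u u' (hu.trans hu'.symm)
          rw [← hcount, ← hcount] at this
          exact_mod_cast this
    refine ⟨fun k l m => if h : ∃ d, d ∈ Rfam s (ωu : F) (βu : H) m then
      {z : H | z ∈ Rfam s (ωu : F) (βu : H) k ∧
        h.choose + z ∈ Rfam s (ωu : F) (βu : H) l}.ncard else 0, fun k l m d hd => ?_⟩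
    have h : ∃ d, d ∈ Rfam s (ωu : F) (βu : H) m := ⟨d, hd⟩
    beta_reduce
    rw [dif_pos h]
    exact key k l m _ _ hd h.choose_spec

theorem exists_sub (s : ℕ) (hs : 1 ≤ s) (F : Type*) [Field F] [Fintype F] [CharP F 2]
    (hF : Fintype.card F = 2 ^ (3 * s)) : Nonempty (GaloisField 2 s →+* F) := by
  letI := ZMod.algebra F 2
  have h1 : Module.finrank (ZMod 2) (GaloisField 2 s) = s := GaloisField.finrank 2 (by omega)
  have h2 : Module.finrank (ZMod 2) F = 3 * s := by
    have := Module.card_eq_pow_finrank (K := ZMod 2) (V := F)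
    rw [hF, ZMod.card] at this
    exact (Nat.pow_right_injective (le_refl 2) this).symm
  obtain ⟨g⟩ := FiniteField.nonempty_algHom_of_finrank_dvd (F := ZMod 2)
    (K := GaloisField 2 s) (L := F) (by rw [h1, h2]; exact Dvd.intro_left 3 rfl)
  exact ⟨g.toRingHom⟩

theorem finrank3 (K L : Type*) [Field K] [Fintype K] [Field L] [Fintype L] [Algebra K L] (r : ℕ)
    (hr : 1 ≤ r) (hK : Fintype.card K = 2 ^ r) (hL : Fintype.card L = 2 ^ (3 * r)) :
    Module.finrank K L = 3 := by
  have := Module.card_eq_pow_finrank (K := K) (V := L)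
  rw [hK, hL, ← pow_mul] at this
  have := Nat.pow_right_injective (le_refl 2) this
  rw [mul_comm] at this
  exact (Nat.eq_of_mul_eq_mul_left (by omega) this).symm

end
end Asm

theorem statement18 (s : ℕ) (hs : 1 ≤ s) (F H : Type*) [Field F] [Fintype F] [Field H] [Fintype H]
    (hF : Fintype.card F = 2 ^ (3 * s)) (hH : Fintype.card H = 2 ^ (9 * s))
    (f : F →+* H) (β : H) (hβ : ∀ x : H, x ≠ 0 → ∃ n : ℕ, x = β ^ n)
    (ω : F) (hω : f ω = β ^ (1 + 2 ^ (3 * s) + 2 ^ (6 * s)))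
    (hωgen : ∀ x : F, x ≠ 0 → ∃ n : ℕ, x = ω ^ n) :
    (∀ x : H, ∃! k : Fin 4, x ∈ Rfam s ω β k) ∧
    ∃ p : Fin 4 → Fin 4 → Fin 4 → ℕ,
      ∀ k l m : Fin 4, ∀ d ∈ Rfam s ω β m,
        {z : H | z ∈ Rfam s ω β k ∧ d + z ∈ Rfam s ω β l}.ncard = p k l m := by
  haveI : CharP F 2 := charP_of_card_eq_prime_pow (p := 2) (f := 3 * s)
    (by rw [hF])
  haveI : CharP H 2 := charP_of_card_eq_prime_pow (p := 2) (f := 9 * s)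
    (by rw [hH])
  obtain ⟨g⟩ := Asm.exists_sub s hs F hF
  letI : Algebra (GaloisField 2 s) F := g.toAlgebra
  letI : Algebra F H := f.toAlgebra
  letI : Fintype (GaloisField 2 s) := Fintype.ofFinite _
  have hE : Nat.card (GaloisField 2 s) = 2 ^ s := GaloisField.card 2 s (by omega)
  have h3 : Module.finrank (GaloisField 2 s) F = 3 :=
    Asm.finrank3 _ _ s hs (by rw [← Nat.card_eq_fintype_card, hE]) hF
  have h3' : Module.finrank F H = 3 :=
    Asm.finrank3 _ _ (3 * s) (by omega) hF (by rw [hH]; congr 1; ring)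
  have hβ0 : β ≠ 0 := by
    rintro rfl
    have h1 : ∀ x : H, x = 0 ∨ x = 1 := by
      intro x
      by_cases hx : x = 0
      · exact Or.inl hx
      · obtain ⟨n, hn⟩ := hβ x hx
        rcases Nat.eq_zero_or_pos n with h | h
        · right; rw [hn, h, pow_zero]
        · exact absurd (by rw [hn, zero_pow (by omega)]) hx
    have h2 : Fintype.card H ≤ 2 := by
      classical
      rw [← Finset.card_univ]
      refine (Finset.card_le_card (t := {0, 1}) fun x _ => ?_).trans Finset.card_le_two
      simpa using h1 x
    have h4 : 2 ^ 2 ≤ 2 ^ (9 * s) := Nat.pow_le_pow_right (by norm_num) (by omega)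
    omega
  have hω0 : ω ≠ 0 := by
    rintro rfl
    rw [map_zero] at hω
    exact pow_ne_zero _ hβ0 hω.symm
  have hN : Core.normU F (Units.mk0 β hβ0) = Units.mk0 ω hω0 := by
    apply Units.ext
    apply (algebraMap F H).injective
    change algebraMap F H (Algebra.norm F β) = f ω
    rw [HD.norm3 h3', hω, Nat.card_eq_fintype_card, hF, ← pow_mul, pow_add, pow_add, pow_one]
    congr 3
    ring
  exact Asm.mid h3 h3' hs hE (Units.mk0 β hβ0) hβ (Units.mk0 ω hω0) hN
end
end

section
/- For every integer a: if a mod M ∈ T_1 then ψ''(β^a R''_1) = −2^{3s} + 2^{2s} − 1, ψ''(β^a R''_2) = 2^{s−1}(2^s − 1)(2^{3s} + 2^s + 1), and ψ''(β^a R''_3) = −2^{s−1}(2^s − 1)(2^{3s} − 2^s + 1); if a mod M ∈ T_2 then ψ''(β^a R''_1) = (2^s − 1)(2^{3s} + 2^s + 1), ψ''(β^a R''_2) = −2^{s−1}(2^{3s+1} − 2^{2s} + 1), and ψ''(β^a R''_3) = 2^{s−1}(2^s − 1)²; if a mod M ∈ T_3 then ψ''(β^a R''_1) = −(2^s + 1)(2^{3s}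 − 2^s + 1), ψ''(β^a R''_2) = 2^{s−1}(2^{2s} − 1), and ψ''(β^a R''_3) = 2^{s−1}(2^{3s+1} + 2^{2s} − 2^{s+1} + 1). -/
noncomputable section

open scoped BigOperators

open scoped BigOperators

section cubic
set_option maxHeartbeats 1000000 in
open Classical in
theorem cubic_count {F H : Type*} [Field F] [Fintype F] [Field H] [Fintype H] [Algebra F H]
    (h2 : (2 : F) = 0) (σ : H →ₐ[F] H) (h3 : ∀ x, σ (σ (σ x)) = x)
    (hfix : ∀ x, σ x = x → ∃ y, algebraMap F H y = x)
    (hroot : ∀ t r c : F, (∀ x : F, x ^ 3 + t * x ^ 2 + r * x + c ≠ 0) →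
      ∃ x : H, x ^ 3 + algebraMap F H t * x ^ 2 + algebraMap F H r * x + algebraMap F H c = 0)
    (t r c : F) :
    ((Finset.univ.filter (fun x : H => x + σ x + σ (σ x) = algebraMap F H t ∧
        x * σ x + σ x * σ (σ x) + σ (σ x) * x = algebraMap F H r ∧
        x * σ x * σ (σ x) = algebraMap F H c)).card : ℤ) =
    3 - 3 * (Finset.univ.filter (fun x : F => x ^ 3 + t * x ^ 2 + r * x + c = 0)).card +
      (Finset.univ.filter (fun p : F × F × F => p.1 + p.2.1 + p.2.2 = t ∧
        p.1 * p.2.1 + p.2.1 * p.2.2 + p.2.2 * p.1 = r ∧ p.1 * p.2.1 * p.2.2 = c)).card := by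
  have h2H : (2 : H) = 0 := by
    have := congrArg (algebraMap F H) h2
    rwa [map_ofNat, map_zero] at this
  have inj := (algebraMap F H).injective
  by_cases hno : ∀ x : F, x ^ 3 + t * x ^ 2 + r * x + c ≠ 0
  · have hC : (Finset.univ.filter (fun x : F => x ^ 3 + t * x ^ 2 + r * x + c = 0)) = ∅ := by
      ext x; simp [hno x]
    have hB : (Finset.univ.filter (fun p : F × F × F => p.1 + p.2.1 + p.2.2 = t ∧
        p.1 * p.2.1 + p.2.1 * p.2.2 + p.2.2 * p.1 = r ∧ p.1 * p.2.1 * p.2.2 = c)) = ∅ := by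
      ext ⟨x, y, z⟩
      simp only [Finset.mem_filter, Finset.mem_univ, true_and, Finset.notMem_empty, iff_false]
      rintro ⟨rfl, rfl, rfl⟩
      apply hno x
      linear_combination (x ^ 3 + x ^ 2 * y + x ^ 2 * z + x * y * z) * h2
    obtain ⟨x, hx⟩ := hroot t r c hno
    have key : ∀ y : H, y ^ 3 + algebraMap F H t * y ^ 2 + algebraMap F H r * y +
        algebraMap F H c = 0 → (y ≠ σ y ∧ σ y ≠ σ (σ y) ∧ y ≠ σ (σ y)) ∧
        y + σ y + σ (σ y) = algebraMap F H t ∧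
        y * σ y + σ y * σ (σ y) + σ (σ y) * y = algebraMap F H r ∧
        y * σ y * σ (σ y) = algebraMap F H c := by
      intro y hy
      have hy1 := congrArg σ hy
      have hy2 := congrArg σ hy1
      simp only [map_add, map_mul, map_pow, AlgHom.commutes, map_zero] at hy1 hy2
      have n1 : y ≠ σ y := by
        intro h
        obtain ⟨z, rfl⟩ := hfix y h.symm
        apply hno z
        apply inj
        simpa using hy
      have n2 : σ y ≠ σ (σ y) := fun h => n1 (σ.toRingHom.injective h)
      have n3 : y ≠ σ (σ y) := by
        intro h
        apply n1
        have := congrArg σ h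
        rw [h3] at this
        exact this.symm
      set a := y
      set b := σ a
      set d := σ b
      set t' := algebraMap F H t
      set r' := algebraMap F H r
      set c' := algebraMap F H c
      have s1 : a - b ≠ 0 := sub_ne_zero.2 n1
      have s2 : b - d ≠ 0 := sub_ne_zero.2 n2
      have s3 : a - d ≠ 0 := sub_ne_zero.2 n3
      have e1 : a ^ 2 + a * b + b ^ 2 + t' * (a + b) + r' = 0 := by
        apply mul_left_cancel₀ s1
        linear_combination hy - hy1
      have e2 : a ^ 2 + a * d + d ^ 2 + t' * (a + d) + r' = 0 := by
        apply mul_left_cancel₀ s3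
        linear_combination hy - hy2
      have e3 : a + b + d + t' = 0 := by
        apply mul_left_cancel₀ s2
        linear_combination e1 - e2
      have f1 : a + b + d = t' := by linear_combination e3 - t' * h2H
      have f2 : a * b + b * d + d * a = r' := by
        rw [← f1] at e1
        linear_combination e1 - (a ^ 2 + b ^ 2 + a * b + r') * h2H
      refine ⟨⟨n1, n2, n3⟩, f1, f2, ?_⟩
      rw [← f1, ← f2] at hy
      linear_combination hy - (a ^ 3 + a ^ 2 * b + a ^ 2 * d + c') * h2H
    obtain ⟨⟨n1, n2, n3⟩, f1, f2, f3⟩ := key x hx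
    have hA : (Finset.univ.filter (fun x : H => x + σ x + σ (σ x) = algebraMap F H t ∧
        x * σ x + σ x * σ (σ x) + σ (σ x) * x = algebraMap F H r ∧
        x * σ x * σ (σ x) = algebraMap F H c)) = {x, σ x, σ (σ x)} := by
      ext y
      simp only [Finset.mem_filter, Finset.mem_univ, true_and, Finset.mem_insert,
        Finset.mem_singleton]
      constructor
      · rintro ⟨g1, g2, g3⟩
        have : (y - x) * ((y - σ x) * (y - σ (σ x))) = 0 := by
          have e : y ^ 3 + algebraMap F H t * y ^ 2 + algebraMap F H r * y +
            algebraMap F H c = 0 := by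
            rw [← g1, ← g2, ← g3]
            linear_combination (y ^ 3 + y ^ 2 * σ y + y ^ 2 * σ (σ y) + y * σ y * σ (σ y)) * h2H
          rw [← f1, ← f2, ← f3] at e
          linear_combination e - ((x + σ x + σ (σ x)) * y ^ 2 + x * σ x * σ (σ x)) * h2H
        rcases mul_eq_zero.1 this with h | h
        · left; exact sub_eq_zero.1 h
        · rcases mul_eq_zero.1 h with h | h
          · right; left; exact sub_eq_zero.1 h
          · right; right; exact sub_eq_zero.1 h
      · have hx1 := congrArg σ hx
        have hx2 := congrArg σ hx1
        simp only [map_add, map_mul, map_pow, AlgHom.commutes, map_zero] at hx1 hx2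
        rintro (rfl | rfl | rfl)
        · exact ⟨f1, f2, f3⟩
        · exact (key _ hx1).2
        · exact (key _ hx2).2
    rw [hA, hB, hC]
    rw [Finset.card_insert_of_notMem (by simp [n1, n3]), Finset.card_insert_of_notMem (by simp [n2])]
    simp
  · push Not at hno
    obtain ⟨y, hy⟩ := hno
    -- A side
    have hA : (Finset.univ.filter (fun x : H => x + σ x + σ (σ x) = algebraMap F H t ∧
        x * σ x + σ x * σ (σ x) + σ (σ x) * x = algebraMap F H r ∧
        x * σ x * σ (σ x) = algebraMap F H c)) =
        if t = y ∧ r = y ^ 2 ∧ c = y ^ 3 then {algebraMap F H y} else ∅ := by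
      have main : ∀ x : H, (x + σ x + σ (σ x) = algebraMap F H t ∧
        x * σ x + σ x * σ (σ x) + σ (σ x) * x = algebraMap F H r ∧
        x * σ x * σ (σ x) = algebraMap F H c) ↔ x = algebraMap F H y ∧
          (t = y ∧ r = y ^ 2 ∧ c = y ^ 3) := by
        intro x
        constructor
        · rintro ⟨f1, f2, f3⟩
          have hx : x = algebraMap F H y := by
            have e := congrArg (algebraMap F H) hy
            simp only [map_add, map_mul, map_pow, map_zero] at e
            rw [← f1, ← f2, ← f3] at e
            have : (algebraMap F H y - x) * ((algebraMap F H y - σ x) *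
              (algebraMap F H y - σ (σ x))) = 0 := by
              linear_combination e - ((x + σ x + σ (σ x)) * (algebraMap F H y) ^ 2
                + x * σ x * σ (σ x)) * h2H
            rcases mul_eq_zero.1 this with h | h
            · exact (sub_eq_zero.1 h).symm
            · rcases mul_eq_zero.1 h with h | h
              · apply σ.toRingHom.injective
                simpa using (sub_eq_zero.1 h).symm
              · apply σ.toRingHom.injective
                apply σ.toRingHom.injective
                simpa using (sub_eq_zero.1 h).symm
          refine ⟨hx, ?_⟩
          subst hx
          simp only [AlgHom.commutes, ← map_add, ← map_mul] at f1 f2 f3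
          have f1 := inj f1
          have f2 := inj f2
          have f3 := inj f3
          refine ⟨?_, ?_, ?_⟩
          · linear_combination -f1 + y * h2
          · linear_combination -f2 + y ^ 2 * h2
          · linear_combination -f3
        · rintro ⟨rfl, rfl, rfl, rfl⟩
          simp only [AlgHom.commutes, ← map_add, ← map_mul, inj.eq_iff]
          refine ⟨?_, ?_, ?_⟩
          · linear_combination t * h2
          · linear_combination t ^ 2 * h2
          · ring
      split_ifs with h
      · ext x
        simp only [Finset.mem_filter, Finset.mem_univ, true_and, main x, Finset.mem_singleton]
        exact ⟨fun k => k.1, fun k => ⟨k, h⟩⟩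
      · ext x
        simp only [Finset.mem_filter, Finset.mem_univ, true_and, main, h, and_false, Finset.notMem_empty]
    rw [hA]
    -- quadratic cofactor: x^2 + u x + v
    obtain ⟨u, hu⟩ : ∃ u, u = t + y := ⟨_, rfl⟩
    obtain ⟨v, hv⟩ : ∃ v, v = r + u * y := ⟨_, rfl⟩
    have ht : t = y + u := by linear_combination -hu - y * h2
    have hr : r = v + u * y := by linear_combination -hv - u * y * h2
    have hc : c = y * v := by
      rw [ht, hr] at hy
      linear_combination hy - (y ^ 3 + u * y^2 + y * v) * h2
    clear hu hv hy
    subst hc hr ht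
    clear hA
    have fac : ∀ x : F, x ^ 3 + (y + u) * x ^ 2 + (v + u * y) * x + y * v = 0 ↔
        (x = y ∨ x ^ 2 + u * x + v = 0) := by
      intro x
      have : x ^ 3 + (y + u) * x ^ 2 + (v + u * y) * x + y * v =
        (x - y) * (x ^ 2 + u * x + v) := by
        linear_combination (y * x ^ 2 + u * y * x + y * v) * h2
      rw [this, mul_eq_zero, sub_eq_zero]
    by_cases hq : ∃ z, z ^ 2 + u * z + v = 0
    · obtain ⟨z, hz⟩ := hq
      obtain ⟨w, hw⟩ : ∃ w, w = u + z := ⟨_, rfl⟩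
      have hu : u = z + w := by linear_combination -hw - z * h2
      have hv : v = z * w := by rw [hu] at hz; linear_combination hz - (z ^ 2 + z * w) * h2
      clear hz hw
      subst hu hv
      have fac2 : ∀ x : F, x ^ 2 + (z + w) * x + z * w = 0 ↔ x = z ∨ x = w := by
        intro x
        have : x ^ 2 + (z + w) * x + z * w = (x - z) * (x - w) := by
          linear_combination ((z + w) * x) * h2
        rw [this, mul_eq_zero, sub_eq_zero, sub_eq_zero]
      have hC : (Finset.univ.filter (fun x : F => x ^ 3 + (y + (z + w)) * x ^ 2 +
          (z * w + (z + w) * y) * x + y * (z * w) = 0)) = {y, z, w} := by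
        ext x; simp [fac, fac2]
      have hB : (Finset.univ.filter (fun p : F × F × F => p.1 + p.2.1 + p.2.2 = y + (z + w) ∧
        p.1 * p.2.1 + p.2.1 * p.2.2 + p.2.2 * p.1 = z * w + (z + w) * y ∧
        p.1 * p.2.1 * p.2.2 = y * (z * w))) =
          {(y, z, w), (y, w, z), (z, y, w), (z, w, y), (w, y, z), (w, z, y)} := by
        ext ⟨a, b, d⟩
        simp only [Finset.mem_filter, Finset.mem_univ, true_and, Finset.mem_insert,
          Finset.mem_singleton, Prod.mk.injEq]
        constructor
        · rintro ⟨g1, g2, g3⟩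
          have ha : a = y ∨ a = z ∨ a = w := by
            rw [← fac2, ← fac, ← g1, ← g2, ← g3]
            linear_combination (a ^ 3 + a ^ 2 * b + a ^ 2 * d + a * b * d) * h2
          have hquad : ∀ p q : F, b + d = p + q → b * d = p * q → (b = p ∧ d = q) ∨ (b = q ∧ d = p) := by
            intro p q k1 k2
            have : (b - p) * (b - q) = 0 := by linear_combination b * k1 - k2
            rcases mul_eq_zero.1 this with h | h
            · left
              exact ⟨by linear_combination h, by linear_combination k1 - h⟩
            · right
              exact ⟨by linear_combination h, by linear_combination k1 - h⟩
          rcases ha with rfl | rfl | rfl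
          · have := hquad z w (by linear_combination g1) (by linear_combination g2 - a * g1)
            rcases this with ⟨rfl, rfl⟩ | ⟨rfl, rfl⟩ <;> simp
          · have := hquad y w (by linear_combination g1) (by linear_combination g2 - a * g1)
            rcases this with ⟨rfl, rfl⟩ | ⟨rfl, rfl⟩ <;> simp
          · have := hquad y z (by linear_combination g1) (by linear_combination g2 - a * g1)
            rcases this with ⟨rfl, rfl⟩ | ⟨rfl, rfl⟩ <;> simp
        · rintro (⟨rfl, rfl, rfl⟩ | ⟨rfl, rfl, rfl⟩ | ⟨rfl, rfl, rfl⟩ | ⟨rfl, rfl, rfl⟩ |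
            ⟨rfl, rfl, rfl⟩ | ⟨rfl, rfl, rfl⟩) <;> refine ⟨by ring, by ring, by ring⟩
      rw [hC, hB]
      by_cases h1 : y = z
      · subst h1
        by_cases h4 : y = w
        · subst h4
          rw [if_pos ⟨by linear_combination y * h2, by linear_combination y ^ 2 * h2, by ring⟩]
          simp
        · rw [if_neg]
          · have h5 : ¬ w = y := fun h => h4 h.symm
            simp [h4, h5, Finset.card_insert_of_notMem]
          · rintro ⟨k, -⟩
            apply h4
            linear_combination -k + y * h2
      · rw [if_neg]
        · have h1' : ¬ z = y := fun h => h1 h.symm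
          by_cases h4 : y = w
          · subst h4
            simp [h1, h1', Finset.card_insert_of_notMem]
          · have h4' : ¬ w = y := fun h => h4 h.symm
            by_cases h5 : z = w
            · subst h5
              simp [h1, h1', Finset.card_insert_of_notMem]
            · have h5' : ¬ w = z := fun h => h5 h.symm
              simp [h1, h1', h4, h4', h5, h5', Finset.card_insert_of_notMem]
        · rintro ⟨k1, k2, k3⟩
          have e1 : w = z := by linear_combination k1 - z * h2
          subst e1
          have e2 : (w - y) * (w + y) = 0 := by
            linear_combination k2 - w * y * h2
          rcases mul_eq_zero.1 e2 with h | h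
          · apply h1; linear_combination -h
          · apply h1; linear_combination h - w * h2
    · push Not at hq
      have hC : (Finset.univ.filter (fun x : F => x ^ 3 + (y + u) * x ^ 2 +
          (v + u * y) * x + y * v = 0)) = {y} := by
        ext x; simp [fac, hq]
      have hB : (Finset.univ.filter (fun p : F × F × F => p.1 + p.2.1 + p.2.2 = y + u ∧
        p.1 * p.2.1 + p.2.1 * p.2.2 + p.2.2 * p.1 = v + u * y ∧
        p.1 * p.2.1 * p.2.2 = y * v)) = ∅ := by
        ext ⟨a, b, d⟩
        simp only [Finset.mem_filter, Finset.mem_univ, true_and, Finset.notMem_empty, iff_false]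
        rintro ⟨g1, g2, g3⟩
        have ha : a = y := by
          have := (fac a).1 (by
            rw [← g1, ← g2, ← g3]
            linear_combination (a ^ 3 + a ^ 2 * b + a ^ 2 * d + a * b * d) * h2)
          rcases this with h | h
          · exact h
          · exact absurd h (hq a)
        subst ha
        apply hq b
        have k1 : u = b + d := by linear_combination -g1
        subst k1
        linear_combination -g2 + (b ^ 2 + b * d) * h2
      rw [hC, hB, if_neg]
      · simp
      · rintro ⟨k1, k2, k3⟩
        have hu : u = 0 := by linear_combination k1
        subst hu
        apply hq y
        linear_combination k2 + y ^ 2 * h2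
end cubic

noncomputable section
open scoped BigOperators

theorem two_eq_zero' (F : Type*) [Field F] [Algebra (ZMod 2) F] : (2 : F) = 0 := by
  have : algebraMap (ZMod 2) F 2 = 0 := by
    rw [show (2 : ZMod 2) = 0 from rfl, map_zero]
  rwa [map_ofNat] at this

theorem psi_add {F : Type*} [Field F] [Algebra (ZMod 2) F] (x y : F) :
    psi F (x + y) = psi F x * psi F y := by
  unfold psi
  rw [map_add]
  generalize Algebra.trace (ZMod 2) F x = a
  generalize Algebra.trace (ZMod 2) F y = b
  revert a b
  decide

theorem exists_psi {F : Type*} [Field F] [Finite F] [Algebra (ZMod 2) F] :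
    ∃ z : F, psi F z = -1 := by
  obtain ⟨z, hz⟩ := Algebra.trace_surjective (ZMod 2) F 1
  exact ⟨z, by simp [psi, hz]⟩

theorem sum_psi {F : Type*} [Field F] [Fintype F] [Algebra (ZMod 2) F] :
    ∑ x : F, psi F x = 0 := by
  obtain ⟨z, hz⟩ := exists_psi (F := F)
  have : ∑ x : F, psi F (x + z) = ∑ x : F, psi F x :=
    Fintype.sum_equiv (Equiv.addRight z) _ _ (fun _ => rfl)
  simp only [psi_add, hz] at this
  rw [← Finset.sum_mul] at this
  linarith

theorem cubic_root {F H : Type*} [Field F] [Fintype F] [Field H] [Fintype H] [Algebra F H]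
    (hd : Module.finrank F H = 3) (t r c : F) (h : ∀ x : F, x ^ 3 + t * x ^ 2 + r * x + c ≠ 0) :
    ∃ x : H, x ^ 3 + algebraMap F H t * x ^ 2 + algebraMap F H r * x + algebraMap F H c = 0 := by
  classical
  let p : Polynomial F := Cubic.toPoly ⟨1, t, r, c⟩
  have hdeg : p.natDegree = 3 := Cubic.natDegree_of_a_ne_zero' one_ne_zero
  have hm : p.Monic := Cubic.monic_of_a_eq_one'
  have hirr : Irreducible p := by
    rw [hm.irreducible_iff_roots_eq_zero_of_degree_le_three (by omega) (by omega)]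
    rw [Multiset.eq_zero_iff_forall_notMem]
    intro x hx
    rw [Polynomial.mem_roots hm.ne_zero, Polynomial.IsRoot.def] at hx
    apply h x
    simpa [p, Cubic.toPoly] using hx
  have hdvd := (hirr.natDegree_dvd_iff_dvd_X_pow_card_pow_sub_X (n := 3)).1 (by rw [hdeg])
  obtain ⟨g, hg⟩ := hdvd
  have hcard : Nat.card F ^ 3 = Fintype.card H := by
    rw [Module.card_eq_pow_finrank (K := F) (V := H), hd, Nat.card_eq_fintype_card]
  by_contra! hcon
  have hall : ∀ x : H, (g.map (algebraMap F H)).eval x = 0 := by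
    intro x
    have := congrArg (fun q => (q.map (algebraMap F H)).eval x) hg
    simp only [Polynomial.map_sub, Polynomial.map_mul, Polynomial.map_pow, Polynomial.map_X, Polynomial.eval_sub, Polynomial.eval_mul, Polynomial.eval_pow, Polynomial.eval_X] at this
    rw [hcard, FiniteField.pow_card, sub_self] at this
    rcases mul_eq_zero.1 this.symm with k | k
    · exfalso
      apply hcon x
      simpa [p, Cubic.toPoly] using k
    · exact k
  have hX : (Polynomial.X ^ (Nat.card F ^ 3) - Polynomial.X : Polynomial F) ≠ 0 ∧
     (Polynomial.X ^ (Nat.card F ^ 3) - Polynomial.X : Polynomial F).natDegree = Nat.card F ^ 3 := by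
    have : 1 < Nat.card F ^ 3 := by
      rw [hcard]; exact Fintype.one_lt_card
    exact ⟨FiniteField.X_pow_card_sub_X_ne_zero _ this, FiniteField.X_pow_card_sub_X_natDegree_eq _ this⟩
  have hg0 : g ≠ 0 := by
    rintro rfl
    rw [mul_zero] at hg
    exact hX.1 hg
  have hdegs := hX.2
  rw [hg, hm.natDegree_mul' hg0, hdeg] at hdegs
  have := Polynomial.eq_zero_of_natDegree_lt_card_of_eval_eq_zero (g.map (algebraMap F H))
    (f := fun x : H => x) (fun _ _ h => h) hall (by rw [Polynomial.natDegree_map]; omega)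
  rw [Polynomial.map_eq_zero] at this
  exact hg0 this

open Classical in
theorem davenport_hasse {F H : Type*} [Field F] [Fintype F] [Algebra (ZMod 2) F]
    [Field H] [Fintype H] [Algebra (ZMod 2) H] [Algebra F H]
    (hd : Module.finrank F H = 3) (c : F) (hc : c ≠ 0) :
    ∑ x : H with Algebra.norm F x = c, psi H x =
      ∑ p : F × F × F with p.1 * p.2.1 * p.2.2 = c, psi F p.1 * psi F p.2.1 * psi F p.2.2 := by
  have : IsScalarTower (ZMod 2) F H := IsScalarTower.of_algebraMap_eq' (Subsingleton.elim _ _)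
  have hpsi : ∀ x : H, psi H x = psi F (Algebra.trace F H x) := by
    intro x
    unfold psi
    rw [Algebra.trace_trace]
  let σ := FiniteField.frobeniusAlgHom F H
  have hσ : ∀ x, σ x = x ^ Nat.card F := by
    intro x; rw [Nat.card_eq_fintype_card]; rfl
  have hσ2 : ∀ x, σ (σ x) = x ^ (Nat.card F ^ 2) := by
    intro x; rw [hσ, hσ, ← pow_mul, sq]
  have hcard : Nat.card F ^ 3 = Fintype.card H := by
    rw [Module.card_eq_pow_finrank (K := F) (V := H), hd, Nat.card_eq_fintype_card]
  have h3 : ∀ x, σ (σ (σ x)) = x := by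
    intro x
    rw [hσ2, hσ, ← pow_mul]
    conv_rhs => rw [← FiniteField.pow_card x, ← hcard]
    congr 1; ring
  have htr : ∀ x, algebraMap F H (Algebra.trace F H x) = x + σ x + σ (σ x) := by
    intro x
    rw [FiniteField.algebraMap_trace_eq_sum_pow, hd, hσ2, hσ]
    simp [Finset.sum_range_succ]
  have hnm : ∀ x, algebraMap F H (Algebra.norm F x) = x * σ x * σ (σ x) := by
    intro x
    rw [FiniteField.algebraMap_norm_eq_prod_pow, hd, hσ2, hσ]
    simp [Finset.prod_range_succ]
  have inj := (algebraMap F H).injective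
  have hfix : ∀ x, σ x = x → ∃ y, algebraMap F H y = x := by
    intro x hx
    refine ⟨Algebra.trace F H x, ?_⟩
    rw [htr, hx, hx]
    linear_combination x * two_eq_zero' H
  have count := cubic_count (two_eq_zero' F) σ h3 hfix (cubic_root hd)
  have L : ∑ x : H with Algebra.norm F x = c, psi H x = ∑ j : F × F,
      ((Finset.univ.filter (fun x : H => x + σ x + σ (σ x) = algebraMap F H j.1 ∧
        x * σ x + σ x * σ (σ x) + σ (σ x) * x = algebraMap F H j.2 ∧
        x * σ x * σ (σ x) = algebraMap F H c)).card : ℤ) * psi F j.1 := by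
    rw [← Finset.sum_fiberwise (Finset.univ.filter (fun x : H => Algebra.norm F x = c))
      (fun x => (Algebra.trace F H x, Algebra.trace F H (x * σ x))) (fun x => psi H x)]
    refine Finset.sum_congr rfl fun j _ => ?_
    rw [← nsmul_eq_mul, Finset.filter_filter]
    rw [← Finset.sum_const]
    refine Finset.sum_congr ?_ ?_
    · ext x
      simp only [Finset.mem_filter, Finset.mem_univ, true_and]
      rw [← htr, ← hnm, inj.eq_iff, inj.eq_iff]
      have : x * σ x + σ x * σ (σ x) + σ (σ x) * x = algebraMap F H (Algebra.trace F H (x * σ x)) := by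
        rw [htr]; simp only [map_mul, h3]
      rw [this, inj.eq_iff, Prod.ext_iff]
      tauto
    · intro x hx
      simp only [Finset.mem_filter, Finset.mem_univ, true_and] at hx
      rw [hpsi]
      congr 1
      apply inj
      rw [htr, hx.1]
  have R : ∑ p : F × F × F with p.1 * p.2.1 * p.2.2 = c, psi F p.1 * psi F p.2.1 * psi F p.2.2 =
      ∑ j : F × F, ((Finset.univ.filter (fun p : F × F × F => p.1 + p.2.1 + p.2.2 = j.1 ∧
        p.1 * p.2.1 + p.2.1 * p.2.2 + p.2.2 * p.1 = j.2 ∧ p.1 * p.2.1 * p.2.2 = c)).card : ℤ) *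
        psi F j.1 := by
    rw [← Finset.sum_fiberwise (Finset.univ.filter (fun p : F × F × F => p.1 * p.2.1 * p.2.2 = c))
      (fun p => (p.1 + p.2.1 + p.2.2, p.1 * p.2.1 + p.2.1 * p.2.2 + p.2.2 * p.1))]
    refine Finset.sum_congr rfl fun j _ => ?_
    rw [← nsmul_eq_mul, Finset.filter_filter]
    rw [← Finset.sum_const]
    refine Finset.sum_congr ?_ ?_
    · ext p
      simp only [Finset.mem_filter, Finset.mem_univ, true_and, Prod.ext_iff]
      tauto
    · intro p hp
      simp only [Finset.mem_filter, Finset.mem_univ, true_and] at hp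
      rw [← hp.1, psi_add, psi_add]
  have C0 : ∑ j : F × F, ((Finset.univ.filter (fun x : F => x ^ 3 + j.1 * x ^ 2 + j.2 * x + c = 0)).card : ℤ) *
        psi F j.1 = 0 := by
    have : ∀ j : F × F, ((Finset.univ.filter (fun x : F => x ^ 3 + j.1 * x ^ 2 + j.2 * x + c = 0)).card : ℤ) *
        psi F j.1 = ∑ x : F, if x ^ 3 + j.1 * x ^ 2 + j.2 * x + c = 0 then psi F j.1 else 0 := by
      intro j
      rw [← nsmul_eq_mul, ← Finset.sum_const, Finset.sum_filter]
    simp only [this]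
    rw [Finset.sum_comm]
    refine Finset.sum_eq_zero fun x _ => ?_
    by_cases hx : x = 0
    · subst hx
      simp [hc]
    · rw [Fintype.sum_prod_type]
      refine (Finset.sum_congr rfl fun t _ => ?_).trans (sum_psi (F := F))
      have : ∀ r, (x ^ 3 + t * x ^ 2 + r * x + c = 0) ↔ r = -(x ^ 3 + t * x ^ 2 + c) / x := by
        intro r
        rw [eq_div_iff hx]
        constructor <;> intro h <;> linear_combination h
      simp [this]
  have S0 : ∑ j : F × F, psi F j.1 = 0 := by
    rw [Fintype.sum_prod_type]
    simp only [Finset.sum_const]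
    rw [← Finset.smul_sum, sum_psi, smul_zero]
  rw [L, R]
  rw [← sub_eq_zero, ← Finset.sum_sub_distrib]
  calc _ = ∑ j : F × F, (3 * psi F j.1 - 3 * (((Finset.univ.filter (fun x : F => x ^ 3 + j.1 * x ^ 2 + j.2 * x + c = 0)).card : ℤ) *
        psi F j.1)) := by
        refine Finset.sum_congr rfl fun j _ => ?_
        rw [count]
        ring
    _ = 0 := by
        rw [Finset.sum_sub_distrib, ← Finset.mul_sum, ← Finset.mul_sum, C0, S0]
        ring
end

noncomputable section
open scoped BigOperators

/-- the relevant set, for an element of the field -/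
def Sy {F : Type*} [Field F] (s : ℕ) (y : F) : Set F :=
  {u | u ≠ 0 ∧ trFE s (u ^ (2 ^ s + 1)) = 0 ∧ trFE s (y * u) = 0}

structure Tow (s : ℕ) (E F : Type*) [Field E] [Fintype E] [Field F] [Fintype F]
    [Algebra (ZMod 2) E] [Algebra (ZMod 2) F] [Algebra E F] : Prop where
  hE : Fintype.card E = 2 ^ s
  hF : Fintype.card F = 2 ^ (3 * s)
  hs : 1 ≤ s

namespace Tow
variable {s : ℕ} {E F : Type*} [Field E] [Fintype E] [Field F] [Fintype F]
    [Algebra (ZMod 2) E] [Algebra (ZMod 2) F] [Algebra E F]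

theorem finrank (T : Tow s E F) : Module.finrank E F = 3 := by
  have := Module.card_eq_pow_finrank (K := E) (V := F)
  rw [T.hE, T.hF, ← pow_mul, mul_comm] at this
  have := Nat.pow_right_injective (le_refl 2) this
  have hs := T.hs
  exact (Nat.eq_of_mul_eq_mul_left hs this).symm

theorem tr_eq (T : Tow s E F) (x : F) : algebraMap E F (Algebra.trace E F x) = trFE s x := by
  rw [FiniteField.algebraMap_trace_eq_sum_pow, T.finrank, Nat.card_eq_fintype_card, T.hE]
  simp [Finset.sum_range_succ, trFE, ← pow_mul, mul_comm]

theorem psi_tower (_T : Tow s E F) (x : F) : psi F x = psi E (Algebra.trace E F x) := by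
  have : IsScalarTower (ZMod 2) E F := IsScalarTower.of_algebraMap_eq' (Subsingleton.elim _ _)
  unfold psi
  rw [Algebra.trace_trace]

/-- The Frobenius -/
def fr (T : Tow s E F) : F →ₐ[E] F := FiniteField.frobeniusAlgHom E F

theorem fr_apply (T : Tow s E F) (x : F) : T.fr x = x ^ (2 ^ s) := by
  rw [← T.hE]; rfl

theorem trFE_eq (T : Tow s E F) (x : F) : trFE s x = x + T.fr x + T.fr (T.fr x) := by
  simp only [fr_apply, trFE, ← pow_mul]
  congr 2
  ring

theorem fr3 (T : Tow s E F) (x : F) : T.fr (T.fr (T.fr x)) = x := by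
  simp only [fr_apply, ← pow_mul]
  conv_rhs => rw [← FiniteField.pow_card x, T.hF]
  congr 1
  ring

theorem trFE_smul (T : Tow s E F) (e : E) (x : F) :
    trFE s (algebraMap E F e * x) = algebraMap E F e * trFE s x := by
  simp only [T.trFE_eq, map_mul, AlgHom.commutes]
  ring

theorem fixed (T : Tow s E F) (x : F) (hx : T.fr x = x) : ∃ e, algebraMap E F e = x := by
  refine ⟨Algebra.trace E F x, ?_⟩
  rw [T.tr_eq, T.trFE_eq, hx, hx]
  linear_combination x * two_eq_zero' F

open Classical in
theorem sum_psi_E (T : Tow s E F) (y : F) :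
    ∑ e : E, psi F (algebraMap E F e * y) = if trFE s y = 0 then (2 ^ s : ℤ) else 0 := by
  have : ∀ e : E, psi F (algebraMap E F e * y) = psi E (e * Algebra.trace E F y) := by
    intro e
    rw [T.psi_tower, ← Algebra.smul_def, map_smul, smul_eq_mul]
  simp only [this]
  split_ifs with h
  · rw [← T.tr_eq, map_eq_zero] at h
    simp [h, psi, T.hE]
  · have h' : Algebra.trace E F y ≠ 0 := by
      intro h1; apply h; rw [← T.tr_eq, h1, map_zero]
    rw [← sum_psi (F := E)]
    exact Fintype.sum_equiv (Equiv.mulRight₀ _ h') _ _ (fun _ => rfl)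

open Classical in
theorem sum_psi_Eu (T : Tow s E F) (y : F) :
    ∑ e : Eˣ, psi F (algebraMap E F e * y) = (2 ^ s : ℤ) * (if trFE s y = 0 then 1 else 0) - 1 := by

  have h := T.sum_psi_E y
  rw [← Finset.add_sum_erase _ _ (Finset.mem_univ (0 : E))] at h
  have h0 : psi F (algebraMap E F 0 * y) = 1 := by simp [psi]
  rw [h0] at h
  have : ∑ e : Eˣ, psi F (algebraMap E F e * y) =
      ∑ e ∈ Finset.univ.erase (0 : E), psi F (algebraMap E F e * y) := by
    refine Finset.sum_bij (fun e _ => (e : E)) ?_ ?_ ?_ ?_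
    · intro e _; simp
    · intro a _ b _ h; exact Units.ext h
    · intro b hb
      have hb : b ≠ 0 := by simpa using hb
      exact ⟨Units.mk0 b hb, Finset.mem_univ _, rfl⟩
    · intro a _; rfl
  rw [this]
  split_ifs at h ⊢ <;> linarith

theorem mem_Sy (T : Tow s E F) (y u : F) :
    u ∈ Sy s y ↔ u ≠ 0 ∧ trFE s u⁻¹ = 0 ∧ trFE s (y * u) = 0 := by
  unfold Sy
  simp only [Set.mem_ofPred_eq]
  refine and_congr_right fun hu => and_congr_left fun _ => ?_
  have hf : T.fr u ≠ 0 := by simpa using hu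
  have hff : T.fr (T.fr u) ≠ 0 := by simpa using hu
  have : trFE s (u ^ (2 ^ s + 1)) = (u * T.fr u * T.fr (T.fr u)) * trFE s u⁻¹ := by
    rw [T.trFE_eq, T.trFE_eq]
    rw [pow_succ, ← T.fr_apply]
    simp only [map_mul, map_inv₀, T.fr3]
    field_simp
    ring
  rw [this]
  simp [hu]

theorem ncard_coset (T : Tow s E F) (v : F) (hv : v ≠ 0) :
    (Set.range (fun e : Eˣ => algebraMap E F e * v)).ncard = 2 ^ s - 1 := by
  rw [Set.ncard_range_of_injective, Nat.card_units, Nat.card_eq_fintype_card, T.hE]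
  intro a b h
  exact Units.ext ((algebraMap E F).injective (mul_right_cancel₀ hv h))

theorem coset_of_ratio (T : Tow s E F) (v w : F) (hv : v ≠ 0) (hw : w ≠ 0)
    (h : T.fr w * v = w * T.fr v) : w ∈ Set.range (fun e : Eˣ => algebraMap E F e * v) := by
  have hf : T.fr v ≠ 0 := by simpa using hv
  obtain ⟨e, he⟩ := T.fixed (w / v) (by
    rw [map_div₀, div_eq_div_iff hf hv, h])
  have he0 : e ≠ 0 := by
    rintro rfl
    rw [map_zero] at he
    exact div_ne_zero hw hv he.symm
  refine ⟨Units.mk0 e he0, ?_⟩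
  simp only [Units.val_mk0, he]
  field_simp

theorem coset_mem (T : Tow s E F) (y v w : F) (hv : v ∈ Sy s y)
    (h : w ∈ Set.range (fun e : Eˣ => algebraMap E F e * v)) : w ∈ Sy s y := by
  rw [T.mem_Sy] at hv ⊢
  obtain ⟨e, rfl⟩ := h
  obtain ⟨h1, h2, h3⟩ := hv
  refine ⟨mul_ne_zero (by simp) h1, ?_, ?_⟩
  · have := T.trFE_smul (e⁻¹ : E) v⁻¹
    simp only [mul_inv]
    rw [← map_inv₀, this, h2, mul_zero]
  · rw [mul_left_comm, T.trFE_smul, h3, mul_zero]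

theorem quad (T : Tow s E F) (y u : F) (hu : u ∈ Sy s y) :
    y * u ^ 2 + trFE s y * u * T.fr u + T.fr y * T.fr u ^ 2 = 0 := by
  rw [T.mem_Sy] at hu
  obtain ⟨h0, h1, h2⟩ := hu
  have hf : T.fr u ≠ 0 := by simpa using h0
  have hff : T.fr (T.fr u) ≠ 0 := by simpa using h0
  rw [T.trFE_eq] at h1 h2 ⊢
  simp only [map_mul, map_inv₀] at h1 h2
  field_simp at h1
  linear_combination (u + T.fr u) * h2 - T.fr (T.fr y) * h1 +
    (T.fr (T.fr y) * u * T.fr u) * two_eq_zero' F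

theorem card_one (T : Tow s E F) (y : F) (hy : y ≠ 0) (h : trFE s y = 0) :
    (Sy s y).ncard = 2 ^ s - 1 := by
  have hchar : CharP F 2 := charP_of_injective_algebraMap (algebraMap (ZMod 2) F).injective 2
  obtain ⟨w, hw⟩ := FiniteField.isSquare_of_char_two (ringChar.eq F 2 ▸ rfl) y
  have hw0 : w ≠ 0 := by rintro rfl; simp at hw; exact hy hw
  have htw : trFE s w = 0 := by
    have : trFE s w ^ 2 = trFE s y := by
      rw [T.trFE_eq, T.trFE_eq, hw]
      simp only [map_mul]
      linear_combination (w * T.fr w + T.fr w * T.fr (T.fr w) + T.fr (T.fr w) * w) * two_eq_zero' F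
    rw [h] at this
    exact pow_eq_zero_iff (two_ne_zero) |>.1 this
  have hmem : w⁻¹ ∈ Sy s y := by
    rw [T.mem_Sy]
    refine ⟨inv_ne_zero hw0, by rwa [inv_inv], ?_⟩
    rw [hw, mul_assoc, mul_inv_cancel₀ hw0, mul_one, htw]
  have : Sy s y = Set.range (fun e : Eˣ => algebraMap E F e * w⁻¹) := by
    apply Set.Subset.antisymm
    · intro u hu
      have hq := T.quad y u hu
      rw [h, hw] at hq
      apply T.coset_of_ratio _ _ (inv_ne_zero hw0) hu.1
      have hf : T.fr w ≠ 0 := by simpa using hw0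
      have : (w * u - T.fr w * T.fr u) ^ 2 = 0 := by
        rw [map_mul] at hq
        linear_combination hq - w * u * T.fr w * T.fr u * two_eq_zero' F
      have := pow_eq_zero_iff (two_ne_zero) |>.1 this
      rw [map_inv₀]
      field_simp
      linear_combination -this
    · intro u hu
      exact T.coset_mem _ _ _ hmem hu
  rw [this, T.ncard_coset _ (inv_ne_zero hw0)]

theorem card_two (T : Tow s E F) (y : F) (hy : y ≠ 0) (h : trFE s y ≠ 0) :
    (Sy s y).ncard = 0 ∨ (Sy s y).ncard = 2 * (2 ^ s - 1) := by
  by_cases hS : Sy s y = ∅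
  · left; simp [hS]
  right
  obtain ⟨u, hu⟩ := Set.nonempty_iff_ne_empty.2 hS
  have hu0 := hu.1
  have hfu : T.fr u ≠ 0 := by simpa using hu0
  have hfy : T.fr y ≠ 0 := by simpa using hy
  have hz0 : (y * u)⁻¹ ≠ 0 := inv_ne_zero (mul_ne_zero hy hu0)
  have hz : (y * u)⁻¹ ∈ Sy s y := by
    have hu' := (T.mem_Sy _ _).1 hu
    rw [T.mem_Sy]
    refine ⟨hz0, by rw [inv_inv]; exact hu'.2.2, ?_⟩
    rw [mul_inv, ← mul_assoc, mul_inv_cancel₀ hy, one_mul]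
    exact hu'.2.1
  have hqu := T.quad y u hu
  have hS' : Sy s y = Set.range (fun e : Eˣ => algebraMap E F e * u) ∪
      Set.range (fun e : Eˣ => algebraMap E F e * (y * u)⁻¹) := by
    apply Set.Subset.antisymm
    · intro w hw
      have hqw := T.quad y w hw
      have : (T.fr w * u - w * T.fr u) * (T.fr w * T.fr y * T.fr u - w * y * u) = 0 := by
        linear_combination u * T.fr u * hqw - w * T.fr w * hqu
      rcases mul_eq_zero.1 this with k | k
      · left
        exact T.coset_of_ratio _ _ hu0 hw.1 (sub_eq_zero.1 k)
      · right
        apply T.coset_of_ratio _ _ hz0 hw.1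
        rw [map_inv₀, map_mul]
        field_simp
        linear_combination k
    · rintro w (hw | hw)
      · exact T.coset_mem _ _ _ hu hw
      · exact T.coset_mem _ _ _ hz hw
  rw [hS', Set.ncard_union_eq, T.ncard_coset _ hu0, T.ncard_coset _ hz0]
  · ring
  · rw [Set.disjoint_left]
    rintro w ⟨e, rfl⟩ ⟨e', h'⟩
    have he0 : algebraMap E F e ≠ 0 := by simp
    have he0' : algebraMap E F e' ≠ 0 := by simp
    simp only at h'
    have k1 : algebraMap E F e' = algebraMap E F e * (y * u ^ 2) := by
      field_simp at h'
      rw [h']; ring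
    have k2 := congrArg T.fr k1
    simp only [AlgHom.commutes, map_mul, map_pow] at k2
    have k3 : y * u ^ 2 = T.fr y * T.fr u ^ 2 := by
      apply mul_left_cancel₀ he0
      rw [← k1, k2]
    have : trFE s y * (u * T.fr u) = 0 := by
      linear_combination hqu + k3 - y * u ^ 2 * two_eq_zero' F
    rcases mul_eq_zero.1 this with k | k
    · exact h k
    · exact mul_ne_zero hu0 hfu k

end Tow
end

noncomputable section
open scoped BigOperators

section ga
open Classical
variable {G : Type*} [CommGroup G] [Fintype G]

/-- group ring element from a function -/
def gmk (φ : G → ℤ) : MonoidAlgebra ℤ G := ∑ g, MonoidAlgebra.single g (φ g)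

theorem coeff_gmk (φ : G → ℤ) (g : G) : (gmk φ).coeff g = φ g := by
  unfold gmk
  rw [MonoidAlgebra.coeff_sum, Finset.sum_apply']
  simp [Finsupp.single_apply]

theorem ga_ext {x y : MonoidAlgebra ℤ G} (h : ∀ g, x.coeff g = y.coeff g) : x = y := by
  apply MonoidAlgebra.coeff_injective
  ext g
  exact h g

theorem coeff_single_mul' (a : G) (r : ℤ) (x : MonoidAlgebra ℤ G) (g : G) :
    (MonoidAlgebra.single a r * x).coeff g = r * x.coeff (a⁻¹ * g) := by
  rw [MonoidAlgebra.coeff_single_mul_eq_mul_coeff]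
  intro m _
  constructor
  · rintro rfl; simp
  · rintro rfl; simp

theorem coeff_gmk_mul (φ : G → ℤ) (x : MonoidAlgebra ℤ G) (g : G) :
    (gmk φ * x).coeff g = ∑ h, φ h * x.coeff (h⁻¹ * g) := by
  unfold gmk
  rw [Finset.sum_mul, MonoidAlgebra.coeff_sum, Finset.sum_apply']
  simp only [coeff_single_mul']

theorem coeff_int_mul (n : ℤ) (x : MonoidAlgebra ℤ G) (g : G) :
    ((n : MonoidAlgebra ℤ G) * x).coeff g = n * x.coeff g := by
  rw [← zsmul_eq_mul, MonoidAlgebra.coeff_smul_apply, smul_eq_mul]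

theorem int_cancel (n : ℤ) (hn : n ≠ 0) {x y : MonoidAlgebra ℤ G}
    (h : (n : MonoidAlgebra ℤ G) * x = (n : MonoidAlgebra ℤ G) * y) : x = y := by
  apply ga_ext
  intro g
  have := congrArg (fun z => z.coeff g) h
  simp only [coeff_int_mul] at this
  exact mul_left_cancel₀ hn this

/-- all ones -/
def gJ : MonoidAlgebra ℤ G := gmk (fun _ => 1)

theorem gmk_mul_J (φ : G → ℤ) : gmk φ * gJ = ((∑ g, φ g : ℤ) : MonoidAlgebra ℤ G) * gJ := by
  apply ga_ext
  intro g
  rw [coeff_gmk_mul, coeff_int_mul]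
  simp [gJ, coeff_gmk]

end ga

/-- the formal computation in the group ring -/
theorem formal {G : Type*} [CommGroup G] [Fintype G] (q : ℤ) (hq : 2 ≤ q)
    (K Ψ Ψ' e D D' J R2 R2' R3' : MonoidAlgebra ℤ G)
    (hK : K = Ψ ^ 3) (h1 : Ψ * e = q * D - J) (h1' : Ψ' * e = q * D' - J)
    (he : e * e = (q - 1 : ℤ) * e) (heJ : e * J = (q - 1 : ℤ) * J)
    (hJJ : J * J = (q ^ 3 - 1 : ℤ) * J) (hΨJ : Ψ * J = -J)
    (hΨΨ : Ψ * Ψ' = (q ^ 3 : ℤ) - J)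
    (hD : D * D = (q - 1 : ℤ) * (D + 2 * R2)) (hD' : D' * D' = (q - 1 : ℤ) * (D' + 2 * R2'))
    (hJ : J = D' + R2' + R3') :
    K * D' = (q ^ 4 : ℤ) * (D + 2 * R2) - (q ^ 4 + q ^ 3 - q ^ 2 + 1 : ℤ) * J ∧
    2 * (K * R2') = (q ^ 5 : ℤ) * D - (q ^ 4 : ℤ) * (D + 2 * R2) + (q ^ 3 - q : ℤ) * J ∧
    K * R3' = - J - K * D' - K * R2' := by
  have hq0 : q ≠ 0 := by omega
  have hq1 : q - 1 ≠ 0 := by omega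
  have hJJ2 := hJJ
  push_cast at h1 h1' he heJ hJJ hΨΨ hD hD'
  have hqDJ : (q : MonoidAlgebra ℤ G) * D * J = (q ^ 3 - q) * J := by
    linear_combination -J * h1 + hJJ + e * hΨJ - heJ
  -- Ψ² e
  have a1 : Ψ ^ 2 * e = (q ^ 2 : ℤ) * (D + 2 * R2) - (q ^ 2 + q - 1 : ℤ) * J := by
    apply int_cancel (q - 1) hq1
    push_cast
    have : (Ψ * e) * (Ψ * e) = (q * D - J) * (q * D - J) := by rw [h1]
    linear_combination this - Ψ ^ 2 * he + q ^ 2 * hD - 2 * hqDJ + hJJ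
  have a2 : K * D' = (q ^ 2 : ℤ) * (Ψ ^ 2 * e) - J := by
    apply int_cancel q hq0
    push_cast
    rw [hK]
    linear_combination (-Ψ ^ 3) * h1' + Ψ ^ 2 * e * hΨΨ + (Ψ ^ 2 - Ψ + 1) * hΨJ - Ψ ^ 2 * heJ
      - (q - 1) * (Ψ - 1) * hΨJ
  have a3 : K * D' = (q ^ 4 : ℤ) * (D + 2 * R2) - (q ^ 4 + q ^ 3 - q ^ 2 + 1 : ℤ) * J := by
    rw [a2, a1]
    push_cast
    ring
  have b1 : K * (D' * D') = (q - 1 : ℤ) *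
      ((q ^ 5 : ℤ) * D - (q ^ 4 - q ^ 2 + q + 1 : ℤ) * J) := by
    apply int_cancel (q ^ 2) (pow_ne_zero 2 hq0)
    push_cast
    have c1 : (q : MonoidAlgebra ℤ G) * D' = Ψ' * e + J := by rw [h1']; ring
    have c2 : (q : MonoidAlgebra ℤ G) ^ 2 * (K * (D' * D')) =
      Ψ * (Ψ * Ψ') * (Ψ * Ψ') * (e * e) + 2 * Ψ ^ 2 * (Ψ * Ψ') * (e * J) + Ψ ^ 3 * (J * J) := by
      have : (q : MonoidAlgebra ℤ G) ^ 2 * (K * (D' * D')) = K * (q * D') * (q * D') := by ring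
      rw [this, c1, hK]
      ring
    have P2 : Ψ ^ 2 * J = J := by linear_combination (Ψ - 1) * hΨJ
    have P3 : Ψ ^ 3 * J = -J := by linear_combination (Ψ ^ 2 - Ψ + 1) * hΨJ
    rw [c2, hΨΨ, he, heJ, hJJ]
    have d1 : Ψ * ((q : MonoidAlgebra ℤ G) ^ 3 - J) * (q ^ 3 - J) * ((q - 1) * e) =
      (q - 1) * (q ^ 6 * (Ψ * e) - 2 * q ^ 3 * ((q - 1) * (-J)) + (q ^ 3 - 1) * ((q - 1) * (-J))) := by
      linear_combination (q - 1) * (Ψ * e * hJJ - 2 * q ^ 3 * Ψ * heJ - 2 * q ^ 3 * (q - 1) * hΨJ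
         + (q ^ 3 - 1) * (Ψ * heJ + (q - 1) * hΨJ))
    have d2 : 2 * Ψ ^ 2 * ((q : MonoidAlgebra ℤ G) ^ 3 - J) * ((q - 1) * J) = 2 * (q - 1) * J := by
      linear_combination 2 * (q - 1) * ((q ^ 3 - J) * P2 - hJJ)
    have d3 : Ψ ^ 3 * (((q : MonoidAlgebra ℤ G) ^ 3 - 1) * J) = - (q ^ 3 - 1) * J := by
      linear_combination (q ^ 3 - 1) * P3
    rw [d1, d2, d3, h1]
    ring
  refine ⟨a3, ?_, ?_⟩
  · apply int_cancel (q - 1) hq1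
    push_cast at b1 a3 ⊢
    linear_combination b1 - K * hD' - (q - 1) * a3
  · have P3 : Ψ ^ 3 * J = -J := by linear_combination (Ψ ^ 2 - Ψ + 1) * hΨJ
    rw [← hK] at P3
    linear_combination P3 - K * hJ
end

noncomputable section
open scoped BigOperators
open Classical

theorem sum_units {F : Type*} [Field F] [Fintype F] (φ : F → ℤ) :
    ∑ x : Fˣ, φ x = ∑ x : F, φ x - φ 0 := by
  rw [← Finset.add_sum_erase _ _ (Finset.mem_univ (0 : F))]
  have : ∑ e : Fˣ, φ e = ∑ e ∈ Finset.univ.erase (0 : F), φ e := by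
    refine Finset.sum_bij (fun e _ => (e : F)) ?_ ?_ ?_ ?_
    · intro e _; simp
    · intro a _ b _ h; exact Units.ext h
    · intro b hb
      have hb : b ≠ 0 := by simpa using hb
      exact ⟨Units.mk0 b hb, Finset.mem_univ _, rfl⟩
    · intro a _; rfl
  rw [this]; ring

theorem psi_zero {F : Type*} [Field F] [Algebra (ZMod 2) F] : psi F 0 = 1 := by simp [psi]

theorem sum_psi_units {F : Type*} [Field F] [Fintype F] [Algebra (ZMod 2) F] :
    ∑ x : Fˣ, psi F x = -1 := by
  rw [sum_units (psi F), sum_psi, psi_zero]; ring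

theorem psi_sq {F : Type*} [Field F] [Algebra (ZMod 2) F] (x : F) : psi F x * psi F x = 1 := by
  unfold psi; split_ifs <;> rfl

section
variable {F H : Type*} [Field F] [Fintype F] [Algebra (ZMod 2) F]
    [Field H] [Fintype H] [Algebra (ZMod 2) H] [Algebra F H]

/-- the character element -/
def gPsi (F : Type*) [Field F] [Fintype F] [Algebra (ZMod 2) F] : MonoidAlgebra ℤ Fˣ :=
  gmk (fun g : Fˣ => psi F g)

def gPsi' (F : Type*) [Field F] [Fintype F] [Algebra (ZMod 2) F] : MonoidAlgebra ℤ Fˣ :=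
  gmk (fun g : Fˣ => psi F ((g⁻¹ : Fˣ) : F))

def gK (F H : Type*) [Field F] [Fintype F] [Algebra (ZMod 2) F]
    [Field H] [Fintype H] [Algebra (ZMod 2) H] [Algebra F H] : MonoidAlgebra ℤ Fˣ :=
  ∑ x : Hˣ, MonoidAlgebra.single (Units.map (Algebra.norm F) x) (psi H x)

theorem gK_eq (hd : Module.finrank F H = 3) : gK F H = gPsi F ^ 3 := by
  have e3 : gPsi F ^ 3 = ∑ p : Fˣ × Fˣ × Fˣ, MonoidAlgebra.single (p.1 * p.2.1 * p.2.2)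
      (psi F p.1 * psi F p.2.1 * psi F p.2.2) := by
    simp only [pow_succ, pow_zero, one_mul, gPsi, gmk, Finset.sum_mul_sum, Fintype.sum_prod_type,
      MonoidAlgebra.single_mul_single, Finset.sum_mul]
    refine Finset.sum_congr rfl fun x _ => ?_
    simp only [Finset.mul_sum, Finset.sum_mul, MonoidAlgebra.single_mul_single]
    rw [Finset.sum_comm]
  rw [e3]
  apply ga_ext
  intro c
  rw [gK, MonoidAlgebra.coeff_sum, Finset.sum_apply', MonoidAlgebra.coeff_sum, Finset.sum_apply']
  simp only [MonoidAlgebra.coeff_single, Finsupp.single_apply]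
  rw [← Finset.sum_filter, ← Finset.sum_filter]
  have dh := davenport_hasse (F := F) (H := H) hd c c.ne_zero
  trans ∑ x : H with Algebra.norm F x = (c : F), psi H x
  · refine Finset.sum_bij (fun e _ => (e : H)) ?_ ?_ ?_ ?_
    · intro x hx
      simp only [Finset.mem_filter, Finset.mem_univ, true_and] at hx ⊢
      rw [← hx]; rfl
    · intro a _ b _ h; exact Units.ext h
    · intro b hb
      simp only [Finset.mem_filter, Finset.mem_univ, true_and] at hb
      have hb0 : b ≠ 0 := by
        rintro rfl
        rw [Algebra.norm_zero] at hb
        exact c.ne_zero hb.symm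
      refine ⟨Units.mk0 b hb0, ?_, rfl⟩
      simp only [Finset.mem_filter, Finset.mem_univ, true_and]
      exact Units.ext hb
    · intro a _; rfl
  rw [dh]
  symm
  refine Finset.sum_bij (fun p _ => ((p.1 : F), (p.2.1 : F), (p.2.2 : F))) ?_ ?_ ?_ ?_
  · intro x hx
    simp only [Finset.mem_filter, Finset.mem_univ, true_and] at hx ⊢
    rw [← hx]; simp
  · rintro ⟨a, b, d⟩ _ ⟨a', b', d'⟩ _ h
    simp only [Prod.mk.injEq] at h ⊢
    exact ⟨Units.ext h.1, Units.ext h.2.1, Units.ext h.2.2⟩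
  · rintro ⟨a, b, d⟩ hb
    simp only [Finset.mem_filter, Finset.mem_univ, true_and] at hb
    have h0 : a * b * d ≠ 0 := by rw [hb]; exact c.ne_zero
    have hd0 : d ≠ 0 := right_ne_zero_of_mul h0
    have hab := left_ne_zero_of_mul h0
    refine ⟨(Units.mk0 a (left_ne_zero_of_mul hab), Units.mk0 b (right_ne_zero_of_mul hab),
      Units.mk0 d hd0), ?_, rfl⟩
    simp only [Finset.mem_filter, Finset.mem_univ, true_and]
    apply Units.ext
    simpa using hb
  · intro a _; rfl

theorem gPsi_J : gPsi F * gJ = -gJ := by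
  rw [gPsi, gmk_mul_J, sum_psi_units]; simp

theorem gPsi_gPsi' : gPsi F * gPsi' F = ((Fintype.card F : ℤ) : MonoidAlgebra ℤ Fˣ) - gJ := by
  apply ga_ext
  intro g
  have hone : ∀ n : ℤ, ((n : MonoidAlgebra ℤ Fˣ)).coeff g = if g = 1 then n else 0 := by
    intro n
    rw [← mul_one (n : MonoidAlgebra ℤ Fˣ), coeff_int_mul, MonoidAlgebra.one_def,
      MonoidAlgebra.coeff_single, Finsupp.single_apply]
    by_cases h : g = 1 <;> simp [h, eq_comm]
  rw [gPsi, coeff_gmk_mul]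
  rw [MonoidAlgebra.coeff_sub, Finsupp.sub_apply, hone]
  simp only [gPsi', gJ, coeff_gmk]
  have : ∀ h : Fˣ, psi F h * psi F (((h⁻¹ * g)⁻¹ : Fˣ) : F) = psi F (h * (1 + (g : F)⁻¹)) := by
    intro h
    rw [← psi_add]
    congr 1
    simp
    ring
  simp only [this]
  rw [sum_units (fun h : F => psi F (h * (1 + (g : F)⁻¹)))]
  rw [zero_mul, psi_zero]
  congr 1
  split_ifs with hg
  · subst hg
    have : (1 + ((1 : Fˣ) : F)⁻¹) = 0 := by
      simp; linear_combination two_eq_zero' F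
    simp only [this, mul_zero, psi_zero]
    simp
  · have h0 : (1 + (g : F)⁻¹) ≠ 0 := by
      intro h
      apply hg
      apply Units.ext
      have hg0 := g.ne_zero
      field_simp at h
      rw [Units.val_one]
      linear_combination h - two_eq_zero' F
    rw [← sum_psi (F := F)]
    exact Fintype.sum_equiv (Equiv.mulRight₀ _ h0) _ _ (fun _ => rfl)
end

section
variable {s : ℕ} {E F : Type*} [Field E] [Fintype E] [Field F] [Fintype F]
    [Algebra (ZMod 2) E] [Algebra (ZMod 2) F] [Algebra E F]

/-- subfield element -/
def gE (E F : Type*) [Field E] [Fintype E] [Field F] [Algebra E F] : MonoidAlgebra ℤ Fˣ :=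
  ∑ e : Eˣ, MonoidAlgebra.single (Units.map (algebraMap E F).toMonoidHom e) 1

def gD (s : ℕ) (F : Type*) [Field F] [Fintype F] : MonoidAlgebra ℤ Fˣ :=
  gmk (fun g : Fˣ => if trFE s (g : F) = 0 then 1 else 0)

def gD' (s : ℕ) (F : Type*) [Field F] [Fintype F] : MonoidAlgebra ℤ Fˣ :=
  gmk (fun g : Fˣ => if trFE s ((g⁻¹ : Fˣ) : F) = 0 then 1 else 0)

/-- indicator of the set where `Sy` has `n` elements -/
def gR (s : ℕ) (F : Type*) [Field F] [Fintype F] (n : ℕ) : MonoidAlgebra ℤ Fˣ :=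
  gmk (fun g : Fˣ => if (Sy s (g : F)).ncard = n then 1 else 0)

def gR' (s : ℕ) (F : Type*) [Field F] [Fintype F] (n : ℕ) : MonoidAlgebra ℤ Fˣ :=
  gmk (fun g : Fˣ => if (Sy s ((g⁻¹ : Fˣ) : F)).ncard = n then 1 else 0)

theorem coeff_gE_mul (x : MonoidAlgebra ℤ Fˣ) (g : Fˣ) :
    (gE E F * x).coeff g = ∑ e : Eˣ, x.coeff (Units.map (algebraMap E F).toMonoidHom e * g) := by
  unfold gE
  rw [Finset.sum_mul, MonoidAlgebra.coeff_sum, Finset.sum_apply']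
  simp only [coeff_single_mul', one_mul]
  refine Fintype.sum_equiv (Equiv.inv _) _ _ (fun e => ?_)
  simp

theorem card_Eu (T : Tow s E F) : (Fintype.card Eˣ : ℤ) = 2 ^ s - 1 := by
  rw [Fintype.card_units, T.hE]
  have : 1 ≤ 2 ^ s := Nat.one_le_two_pow
  push_cast [this]
  ring

theorem gE_gE (T : Tow s E F) : gE E F * gE E F = ((2 ^ s - 1 : ℤ) : MonoidAlgebra ℤ Fˣ) * gE E F := by
  conv_lhs => unfold gE
  rw [Finset.sum_mul_sum]
  simp only [MonoidAlgebra.single_mul_single, ← map_mul, mul_one]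
  have : ∀ a : Eˣ, ∑ b : Eˣ, MonoidAlgebra.single (Units.map (algebraMap E F).toMonoidHom (a * b)) (1 : ℤ)
      = gE E F := by
    intro a
    unfold gE
    exact Fintype.sum_equiv (Equiv.mulLeft a) _ _ (fun _ => rfl)
  simp only [this, Finset.sum_const, Finset.card_univ]
  rw [← card_Eu T, nsmul_eq_mul]
  simp

theorem gE_J (T : Tow s E F) : gE E F * gJ = ((2 ^ s - 1 : ℤ) : MonoidAlgebra ℤ Fˣ) * gJ := by
  apply ga_ext
  intro g
  rw [coeff_gE_mul, coeff_int_mul]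
  simp only [gJ, coeff_gmk, Finset.sum_const, Finset.card_univ, nsmul_eq_mul, card_Eu T]

theorem gJ_gJ (T : Tow s E F) : (gJ : MonoidAlgebra ℤ Fˣ) * gJ =
    (((2 ^ s) ^ 3 - 1 : ℤ) : MonoidAlgebra ℤ Fˣ) * gJ := by
  conv_lhs => enter [1]; unfold gJ
  rw [gmk_mul_J]
  congr 2
  rw [Finset.sum_const, Finset.card_univ, Fintype.card_units, T.hF]
  have : 1 ≤ 2 ^ (3 * s) := Nat.one_le_two_pow
  push_cast [this]
  simp [this]
  rw [← pow_mul, mul_comm]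

theorem gPsi_gE (T : Tow s E F) : gPsi F * gE E F =
    ((2 ^ s : ℤ) : MonoidAlgebra ℤ Fˣ) * gD s F - gJ := by
  apply ga_ext
  intro g
  rw [mul_comm, coeff_gE_mul]
  simp only [MonoidAlgebra.coeff_sub, Finsupp.sub_apply, coeff_int_mul]
  simp only [gPsi, gD, gJ, coeff_gmk]
  rw [← T.sum_psi_Eu]
  rfl

theorem gPsi'_gE (T : Tow s E F) : gPsi' F * gE E F =
    ((2 ^ s : ℤ) : MonoidAlgebra ℤ Fˣ) * gD' s F - gJ := by
  apply ga_ext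
  intro g
  rw [mul_comm, coeff_gE_mul]
  simp only [MonoidAlgebra.coeff_sub, Finsupp.sub_apply, coeff_int_mul]
  simp only [gPsi', gD', gJ, coeff_gmk]
  rw [← T.sum_psi_Eu]
  refine Fintype.sum_equiv (Equiv.inv _) _ _ (fun e => ?_)
  simp [mul_comm]

theorem conv_card (T : Tow s E F) (g : Fˣ) :
    ∑ h : Fˣ, (if trFE s (h : F) = 0 then (1 : ℤ) else 0) *
      (if trFE s ((h⁻¹ * g : Fˣ) : F) = 0 then 1 else 0) = (Sy s (g : F)).ncard := by
  have : ∀ h : Fˣ, (if trFE s (h : F) = 0 then (1 : ℤ) else 0) *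
      (if trFE s ((h⁻¹ * g : Fˣ) : F) = 0 then 1 else 0) =
      if (((h⁻¹ : Fˣ) : F) ∈ Sy s (g : F)) then 1 else 0 := by
    intro h
    rw [T.mem_Sy]
    have e1 : (((h⁻¹ : Fˣ) : F))⁻¹ = h := by simp
    have e2 : (g : F) * ((h⁻¹ : Fˣ) : F) = ((h⁻¹ * g : Fˣ) : F) := by simp [mul_comm]
    rw [e1, e2]
    by_cases h1 : trFE s (h : F) = 0 <;> by_cases h2 : trFE s ((h⁻¹ * g : Fˣ) : F) = 0 <;>
      simp only [h1, h2] <;> simp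
  simp only [this]
  rw [Set.ncard_eq_toFinset_card']
  rw [← Finset.sum_filter, Finset.sum_const, nsmul_eq_mul, mul_one]
  congr 1
  refine Finset.card_bij (fun h _ => ((h⁻¹ : Fˣ) : F)) ?_ ?_ ?_
  · intro h hh
    simpa using hh
  · intro a _ b _ h
    exact inv_injective (Units.ext h)
  · intro b hb
    have hb : b ∈ Sy s (g : F) := by simpa using hb
    refine ⟨(Units.mk0 b hb.1)⁻¹, ?_, ?_⟩
    · simpa using hb
    · simp

theorem trich (T : Tow s E F) (g : Fˣ) :
    ((trFE s (g : F) = 0 ∧ (Sy s (g : F)).ncard = 2 ^ s - 1) ∨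
     (trFE s (g : F) ≠ 0 ∧ ((Sy s (g : F)).ncard = 0 ∨ (Sy s (g : F)).ncard = 2 * (2 ^ s - 1)))) ∧
     1 ≤ 2 ^ s - 1 := by
  constructor
  · by_cases h : trFE s (g : F) = 0
    · left; exact ⟨h, T.card_one _ g.ne_zero h⟩
    · right; exact ⟨h, T.card_two _ g.ne_zero h⟩
  · have : 2 ^ 1 ≤ 2 ^ s := Nat.pow_le_pow_right (by norm_num) T.hs
    omega

theorem trich_eq (T : Tow s E F) (g : Fˣ) :
    ((Sy s (g : F)).ncard : ℤ) = (2 ^ s - 1) * ((if trFE s (g : F) = 0 then 1 else 0) +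
      2 * (if (Sy s (g : F)).ncard = 2 * (2 ^ s - 1) then 1 else 0)) ∧
    (if trFE s (g : F) = 0 then (1 : ℤ) else 0) =
      (if (Sy s (g : F)).ncard = 2 ^ s - 1 then 1 else 0) ∧
    (1 : ℤ) = (if trFE s (g : F) = 0 then 1 else 0) +
      (if (Sy s (g : F)).ncard = 2 * (2 ^ s - 1) then 1 else 0) +
      (if (Sy s (g : F)).ncard = 0 then 1 else 0) := by
  obtain ⟨h, h1⟩ := trich T g
  have hp : ((2 ^ s - 1 : ℕ) : ℤ) = 2 ^ s - 1 := by
    have : 1 ≤ 2 ^ s := Nat.one_le_two_pow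
    push_cast [this]; ring
  rw [← hp]
  generalize 2 ^ s - 1 = k at *
  rcases h with ⟨a, b⟩ | ⟨a, b | b⟩
  · rw [if_pos a, b, if_neg (by omega), if_pos rfl, if_neg (by omega)]; simp
  · rw [if_neg a, b, if_neg (by omega), if_neg (by omega), if_pos rfl]; simp
  · rw [if_neg a, b, if_pos rfl, if_neg (by omega), if_neg (by omega)]
    push_cast
    refine ⟨by ring, by simp, by simp⟩

theorem gD_gD (T : Tow s E F) : gD s F * gD s F = ((2 ^ s - 1 : ℤ) : MonoidAlgebra ℤ Fˣ) *
    (gD s F + 2 * gR s F (2 * (2 ^ s - 1))) := by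
  apply ga_ext
  intro g
  have e2 : (2 : MonoidAlgebra ℤ Fˣ) = ((2 : ℤ) : MonoidAlgebra ℤ Fˣ) := by simp
  rw [e2, coeff_int_mul, MonoidAlgebra.coeff_add, Finsupp.add_apply, coeff_int_mul]
  conv_lhs => rw [gD, coeff_gmk_mul]
  simp only [gD, gR, coeff_gmk]
  rw [conv_card T g]
  exact (trich_eq T g).1

theorem gD'_gD' (T : Tow s E F) : gD' s F * gD' s F = ((2 ^ s - 1 : ℤ) : MonoidAlgebra ℤ Fˣ) *
    (gD' s F + 2 * gR' s F (2 * (2 ^ s - 1))) := by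
  apply ga_ext
  intro g
  have e2 : (2 : MonoidAlgebra ℤ Fˣ) = ((2 : ℤ) : MonoidAlgebra ℤ Fˣ) := by simp
  rw [e2, coeff_int_mul, MonoidAlgebra.coeff_add, Finsupp.add_apply, coeff_int_mul]
  conv_lhs => rw [gD', coeff_gmk_mul]
  simp only [gD', gR', coeff_gmk]
  rw [← (trich_eq T g⁻¹).1, ← conv_card T g⁻¹]
  refine Fintype.sum_equiv (Equiv.inv _) _ _ (fun e => ?_)
  simp [mul_comm]

theorem gR'_one (T : Tow s E F) : gR' s F (2 ^ s - 1) = gD' s F := by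
  apply ga_ext
  intro g
  simp only [gD', gR', coeff_gmk]
  rw [(trich_eq T g⁻¹).2.1]

theorem gJ_eq (T : Tow s E F) : (gJ : MonoidAlgebra ℤ Fˣ) =
    gD' s F + gR' s F (2 * (2 ^ s - 1)) + gR' s F 0 := by
  apply ga_ext
  intro g
  simp only [MonoidAlgebra.coeff_add, Finsupp.add_apply]
  simp only [gD', gR', gJ, coeff_gmk]
  exact (trich_eq T g⁻¹).2.2

theorem main_formal (T : Tow s E F) {H : Type*} [Field H] [Fintype H] [Algebra (ZMod 2) H]
    [Algebra F H] (hd : Module.finrank F H = 3) (q : ℤ) (hq : q = 2 ^ s) (g : Fˣ) (d r : ℤ)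
    (hdg : d = if trFE s (g : F) = 0 then 1 else 0)
    (hrg : r = if (Sy s (g : F)).ncard = 2 * (2 ^ s - 1) then 1 else 0) :
    (gK F H * gR' s F (2 ^ s - 1)).coeff g =
      q ^ 4 * (d + 2 * r) - (q ^ 4 + q ^ 3 - q ^ 2 + 1) ∧
    2 * (gK F H * gR' s F (2 * (2 ^ s - 1))).coeff g =
      q ^ 5 * d - q ^ 4 * (d + 2 * r) + (q ^ 3 - q) ∧
    (gK F H * gR' s F 0).coeff g = -1 - (gK F H * gR' s F (2 ^ s - 1)).coeff g -
      (gK F H * gR' s F (2 * (2 ^ s - 1))).coeff g := by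
  subst hq
  have e2 : (2 : MonoidAlgebra ℤ Fˣ) = ((2 : ℤ) : MonoidAlgebra ℤ Fˣ) := by simp
  obtain ⟨f1, f2, f3⟩ := formal (2 ^ s : ℤ)
    (by simpa using pow_le_pow_right₀ (show (1 : ℤ) ≤ 2 by norm_num) T.hs)
    (gK F H) (gPsi F) (gPsi' F) (gE E F) (gD s F) (gD' s F) gJ
    (gR s F (2 * (2 ^ s - 1))) (gR' s F (2 * (2 ^ s - 1))) (gR' s F 0) (gK_eq hd) (gPsi_gE T)
    (gPsi'_gE T) (gE_gE T) (gE_J T) (gJ_gJ T) gPsi_J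
    (by rw [gPsi_gPsi', T.hF]; congr 2; push_cast; rw [← pow_mul, mul_comm])
    (gD_gD T) (gD'_gD' T) (gJ_eq T)
  rw [gR'_one T]
  have hJ : (gJ : MonoidAlgebra ℤ Fˣ).coeff g = 1 := by simp [gJ, coeff_gmk]
  have hD : (gD s F).coeff g = d := by rw [hdg, gD, coeff_gmk]
  have hR : (gR s F (2 * (2 ^ s - 1))).coeff g = r := by rw [hrg, gR, coeff_gmk]
  have f1 := congrArg (fun z => z.coeff g) f1
  have f2 := congrArg (fun z => z.coeff g) f2
  have f3 := congrArg (fun z => z.coeff g) f3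
  simp only [e2, MonoidAlgebra.coeff_sub, MonoidAlgebra.coeff_add, MonoidAlgebra.coeff_neg,
    Finsupp.sub_apply, Finsupp.add_apply, Finsupp.neg_apply, coeff_int_mul, hJ, hD, hR] at f1 f2 f3
  refine ⟨by rw [f1]; ring, by rw [f2]; ring, f3⟩
end
end

noncomputable section
open scoped BigOperators
open Classical

theorem coeff_gK_mul {s : ℕ} {F H : Type*} [Field F] [Fintype F] [Algebra (ZMod 2) F]
    [Field H] [Fintype H] [Algebra (ZMod 2) H] [Algebra F H] (n : ℕ) (b : Hˣ) :
    (gK F H * gR' s F n).coeff (Units.map (Algebra.norm F) b) =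
      ∑ x : Hˣ, psi H (b * x) * (if (Sy s (Algebra.norm F (x : H))).ncard = n then 1 else 0) := by
  unfold gK
  rw [Finset.sum_mul, MonoidAlgebra.coeff_sum, Finset.sum_apply']
  simp only [coeff_single_mul', gR', coeff_gmk]
  symm
  refine Fintype.sum_equiv (Equiv.mulLeft b) _ _ (fun x => ?_)
  have : ((((Units.map (Algebra.norm F)) ((Equiv.mulLeft b) x))⁻¹ *
      (Units.map (Algebra.norm F)) b)⁻¹ : Fˣ) = Units.map (Algebra.norm F) x := by
    simp [mul_comm]
  rw [this]
  rfl

theorem Sy_scale {s : ℕ} {E F : Type*} [Field E] [Fintype E] [Field F] [Fintype F]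
    [Algebra (ZMod 2) E] [Algebra (ZMod 2) F] [Algebra E F] (T : Tow s E F)
    (ω : F) (h0 : ω ≠ 0) (t : ℤ) (y : F) : Sy s (ω ^ ((Mof s : ℤ) * t) * y) = Sy s y := by
  have hM : T.fr (ω ^ Mof s) = ω ^ Mof s := by
    have h1 : (2 ^ s) ^ 3 = 2 ^ (3 * s) := by rw [← pow_mul, mul_comm]
    have h2 : 2 ^ (2 * s) = (2 ^ s) ^ 2 := by rw [← pow_mul, mul_comm]
    rw [T.fr_apply, ← pow_mul]
    have : Mof s * 2 ^ s = 2 ^ (3 * s) - 1 + Mof s := by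
      have : 1 ≤ 2 ^ (3 * s) := Nat.one_le_two_pow
      unfold Mof
      zify [this]
      rw [mul_comm 3 s, mul_comm 2 s, pow_mul, pow_mul]
      ring
    rw [this, pow_add, ← T.hF, FiniteField.pow_card_sub_one_eq_one _ h0, one_mul]
  obtain ⟨e, he⟩ := T.fixed (ω ^ ((Mof s : ℤ) * t)) (by
    rw [zpow_mul, zpow_natCast, map_zpow₀, hM])
  have he0 : algebraMap E F e ≠ 0 := by rw [he]; exact zpow_ne_zero _ h0
  ext u
  unfold Sy
  simp only [Set.mem_ofPred_eq]
  rw [← he, mul_assoc, T.trFE_smul]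
  simp [he0]

theorem Sy_mod {s : ℕ} {E F : Type*} [Field E] [Fintype E] [Field F] [Fintype F]
    [Algebra (ZMod 2) E] [Algebra (ZMod 2) F] [Algebra E F] (T : Tow s E F)
    (ω : F) (h0 : ω ≠ 0) (a : ℤ) :
    Sa s ω (((a : ZMod (Mof s)).val : ℤ)) = Sy s (ω ^ a) := by
  rw [ZMod.val_intCast]
  have h1 := Sy_scale T ω h0 (a / (Mof s : ℤ)) (ω ^ (a % (Mof s : ℤ)))
  rw [← zpow_add₀ h0, Int.mul_ediv_add_emod] at h1
  rw [h1]
  rfl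

theorem psiSum_eq {s : ℕ} {E F H : Type*} [Field E] [Fintype E] [Field F] [Fintype F]
    [Algebra (ZMod 2) E] [Algebra (ZMod 2) F] [Algebra E F] (T : Tow s E F)
    [Field H] [Fintype H] [Algebra (ZMod 2) H] [Algebra F H]
    (β : H) (hβ0 : β ≠ 0) (hβ : ∀ x : H, x ≠ 0 → ∃ n : ℕ, x = β ^ n) (ω : F) (h0 : ω ≠ 0)
    (hn : Algebra.norm F β = ω) (b : Hˣ) (n : ℕ) (X : Set (ZMod (Mof s)))
    (hX : ∀ x, x ∈ X ↔ (Sa s ω (x.val : ℤ)).ncard = n) :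
    psiSum H b (Rclass s β X) =
      (gK F H * gR' s F n).coeff (Units.map (Algebra.norm F) b) := by
  rw [coeff_gK_mul]
  have hmem : ∀ x : H, x ∈ Rclass s β X ↔ x ≠ 0 ∧ (Sy s (Algebra.norm F x)).ncard = n := by
    intro x
    simp only [Rclass, cyc, Set.mem_iUnion, Set.mem_ofPred_eq, exists_prop]
    constructor
    · rintro ⟨i, hi, t, rfl⟩
      refine ⟨zpow_ne_zero _ hβ0, ?_⟩
      rw [hX] at hi
      have hz : ∀ m : ℤ, Algebra.norm F (β ^ m) = ω ^ m := by
        intro m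
        have h1 := congrArg Units.val (map_zpow (Units.map (Algebra.norm F)) (Units.mk0 β hβ0) m)
        rw [Units.coe_map, Units.val_zpow_eq_zpow_val, Units.val_zpow_eq_zpow_val, Units.coe_map,
          Units.val_mk0] at h1
        rw [← hn]
        exact h1
      rw [hz, zpow_add₀ h0, mul_comm, Sy_scale T ω h0]
      exact hi
    · rintro ⟨hx, hc⟩
      obtain ⟨m, rfl⟩ := hβ x hx
      refine ⟨((m : ℤ) : ZMod (Mof s)), ?_, (m : ℤ) / (Mof s : ℤ), ?_⟩
      · rw [hX, Sy_mod T ω h0, zpow_natCast, ← hn, ← map_pow]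
        exact hc
      · rw [ZMod.val_intCast, Int.emod_add_mul_ediv, zpow_natCast]
  unfold psiSum
  have hR : Rclass s β X = ((Finset.univ.filter fun x : H => x ∈ Rclass s β X : Finset H) : Set H) := by
    ext x; simp
  rw [hR, finsum_mem_coe_finset, Finset.sum_filter]
  have := sum_units (F := H) (fun x => if x ∈ Rclass s β X then psi H (b * x) else 0)
  have hz : (0 : H) ∉ Rclass s β X := fun h => ((hmem 0).1 h).1 rfl
  rw [if_neg hz, sub_zero] at this
  rw [← this]
  refine Finset.sum_congr rfl fun x _ => ?_
  by_cases h : (Sy s (Algebra.norm F (x : H))).ncard = n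
  · rw [if_pos h, if_pos ((hmem _).2 ⟨x.ne_zero, h⟩), mul_one]
  · rw [if_neg h, if_neg (fun h' => h ((hmem _).1 h').2), mul_zero]

theorem main19 (s : ℕ) (hs : 1 ≤ s) (F H : Type*) [Field F] [Fintype F] [Algebra (ZMod 2) F]
    [Field H] [Fintype H] [Algebra (ZMod 2) H]
    (hF : Fintype.card F = 2 ^ (3 * s)) (hH : Fintype.card H = 2 ^ (9 * s))
    (f : F →+* H) (β : H) (hβ : ∀ x : H, x ≠ 0 → ∃ n : ℕ, x = β ^ n)
    (ω : F) (hω : f ω = β ^ (1 + 2 ^ (3 * s) + 2 ^ (6 * s))) (a : ℤ) :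
    ∃ d r : ℤ, ((a : ZMod (Mof s)) ∈ T1 s ω → d = 1 ∧ r = 0) ∧
      ((a : ZMod (Mof s)) ∈ T2 s ω → d = 0 ∧ r = 1) ∧
      ((a : ZMod (Mof s)) ∈ T3 s ω → d = 0 ∧ r = 0) ∧
      psiSum H (β ^ a) (Rclass s β (T1 s ω)) = (2 ^ s) ^ 4 * (d + 2 * r) -
        ((2 ^ s) ^ 4 + (2 ^ s) ^ 3 - (2 ^ s) ^ 2 + 1) ∧
      2 * psiSum H (β ^ a) (Rclass s β (T2 s ω)) =
        (2 ^ s) ^ 5 * d - (2 ^ s) ^ 4 * (d + 2 * r) + ((2 ^ s) ^ 3 - (2 ^ s)) ∧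
      psiSum H (β ^ a) (Rclass s β (T3 s ω)) = -1 - psiSum H (β ^ a) (Rclass s β (T1 s ω)) -
        psiSum H (β ^ a) (Rclass s β (T2 s ω)) := by
  let _ : Algebra F H := f.toAlgebra
  have hd : Module.finrank F H = 3 := by
    have := Module.card_eq_pow_finrank (K := F) (V := H)
    rw [hF, hH, ← pow_mul] at this
    have := Nat.pow_right_injective (le_refl 2) this
    nlinarith
  let _ : Fintype (GaloisField 2 s) := Fintype.ofFinite _
  have hE : Fintype.card (GaloisField 2 s) = 2 ^ s := by
    rw [← Nat.card_eq_fintype_card]; exact GaloisField.card 2 s (by omega)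
  have hFr : Module.finrank (ZMod 2) F = 3 * s := by
    have := Module.card_eq_pow_finrank (K := ZMod 2) (V := F)
    rw [hF, ZMod.card] at this
    exact (Nat.pow_right_injective (le_refl 2) this).symm
  obtain ⟨φ⟩ := FiniteField.nonempty_algHom_of_finrank_dvd (F := ZMod 2) (K := GaloisField 2 s)
    (L := F) (by rw [hFr, GaloisField.finrank 2 (by omega)]; exact Dvd.intro_left 3 rfl)
  let _ : Algebra (GaloisField 2 s) F := φ.toRingHom.toAlgebra
  have T : Tow s (GaloisField 2 s) F := ⟨hE, hF, hs⟩
  have hβ0 : β ≠ 0 := by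
    rintro rfl
    have h1 : ∀ x : H, x ≠ 0 → x = 1 := by
      intro x hx
      obtain ⟨n, rfl⟩ := hβ x hx
      rcases n with _ | n
      · simp
      · simp at hx
    have h2 : Fintype.card H ≤ 2 := by
      rw [← Finset.card_univ]
      calc _ ≤ ({0, 1} : Finset H).card := Finset.card_le_card (by
            intro x _
            by_cases hx : x = 0
            · simp [hx]
            · simp [h1 x hx])
        _ ≤ 2 := Finset.card_le_two
    rw [hH] at h2
    have : 2 ^ 2 ≤ 2 ^ (9 * s) := Nat.pow_le_pow_right (by norm_num) (by omega)
    omega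
  have hn : Algebra.norm F β = ω := by
    apply f.injective
    rw [hω]
    have := FiniteField.algebraMap_norm_eq_prod_pow F H β
    rw [hd, Nat.card_eq_fintype_card, hF] at this
    change f _ = _ at this
    rw [this]
    have h6 : 2 ^ (6 * s) = (2 ^ (3 * s)) ^ 2 := by
      rw [← pow_mul]; congr 1; ring
    rw [h6]
    simp only [Finset.prod_range_succ, Finset.prod_range_zero, one_mul, pow_add, pow_zero, pow_one]
  have h0 : ω ≠ 0 := by
    rw [← hn]; simpa [Algebra.norm_eq_zero_iff] using hβ0
  have hb : β ^ a = ((Units.mk0 β hβ0 ^ a : Hˣ) : H) := by simp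
  have key := fun n X hX => psiSum_eq T β hβ0 hβ ω h0 hn (Units.mk0 β hβ0 ^ a) n X hX
  have hg : ((Units.map (Algebra.norm F) (Units.mk0 β hβ0 ^ a) : Fˣ) : F) = ω ^ a := by
    rw [← hn]; simp
  set g : Fˣ := Units.map (Algebra.norm F) (Units.mk0 β hβ0 ^ a) with hgdef
  obtain ⟨m1, m2, m3⟩ := main_formal T hd (2 ^ s) rfl g _ _ rfl rfl
  rw [← key _ (T1 s ω) (fun x => Iff.rfl), ← hb] at m1
  rw [← key _ (T2 s ω) (fun x => Iff.rfl), ← hb] at m2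
  rw [← key _ (T1 s ω) (fun x => Iff.rfl), ← key _ (T2 s ω) (fun x => Iff.rfl),
    ← key _ (T3 s ω) (fun x => Iff.rfl), ← hb] at m3
  refine ⟨_, _, ?_, ?_, ?_, m1, m2, m3⟩
  all_goals
    intro ha
    obtain ⟨h, h1⟩ := trich T g
    simp only [T1, T2, T3, Set.mem_ofPred_eq] at ha
    rw [Sy_mod T ω h0, ← hg] at ha
    rw [ha] at h ⊢
    generalize 2 ^ s - 1 = k at *
  · rcases h with ⟨u, v⟩ | ⟨u, v⟩
    · rw [if_pos u, if_neg (by omega)]; simp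
    · omega
  · rcases h with ⟨u, v⟩ | ⟨u, v⟩
    · omega
    · rw [if_neg u]; simp
  · rcases h with ⟨u, v⟩ | ⟨u, v⟩
    · omega
    · rw [if_neg u, if_neg (by omega)]; simp

end
theorem statement19 (s : ℕ) (hs : 1 ≤ s) (F H : Type*) [Field F] [Fintype F] [Algebra (ZMod 2) F]
    [Field H] [Fintype H] [Algebra (ZMod 2) H]
    (hF : Fintype.card F = 2 ^ (3 * s)) (hH : Fintype.card H = 2 ^ (9 * s))
    (f : F →+* H) (β : H) (hβ : ∀ x : H, x ≠ 0 → ∃ n : ℕ, x = β ^ n)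
    (ω : F) (hω : f ω = β ^ (1 + 2 ^ (3 * s) + 2 ^ (6 * s)))
    (hωgen : ∀ x : F, x ≠ 0 → ∃ n : ℕ, x = ω ^ n) :
    ∀ a : ℤ,
      ((a : ZMod (Mof s)) ∈ T1 s ω →
        psiSum H (β ^ a) (Rclass s β (T1 s ω)) = -(2 ^ (3 * s)) + 2 ^ (2 * s) - 1 ∧
        psiSum H (β ^ a) (Rclass s β (T2 s ω)) =
          2 ^ (s - 1) * (2 ^ s - 1) * (2 ^ (3 * s) + 2 ^ s + 1) ∧
        psiSum H (β ^ a) (Rclass s β (T3 s ω)) =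
          -(2 ^ (s - 1)) * (2 ^ s - 1) * (2 ^ (3 * s) - 2 ^ s + 1)) ∧
      ((a : ZMod (Mof s)) ∈ T2 s ω →
        psiSum H (β ^ a) (Rclass s β (T1 s ω)) = (2 ^ s - 1) * (2 ^ (3 * s) + 2 ^ s + 1) ∧
        psiSum H (β ^ a) (Rclass s β (T2 s ω)) =
          -(2 ^ (s - 1)) * (2 ^ (3 * s + 1) - 2 ^ (2 * s) + 1) ∧
        psiSum H (β ^ a) (Rclass s β (T3 s ω)) = 2 ^ (s - 1) * (2 ^ s - 1) ^ 2) ∧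
      ((a : ZMod (Mof s)) ∈ T3 s ω →
        psiSum H (β ^ a) (Rclass s β (T1 s ω)) = -((2 ^ s + 1) * (2 ^ (3 * s) - 2 ^ s + 1)) ∧
        psiSum H (β ^ a) (Rclass s β (T2 s ω)) = 2 ^ (s - 1) * (2 ^ (2 * s) - 1) ∧
        psiSum H (β ^ a) (Rclass s β (T3 s ω)) =
          2 ^ (s - 1) * (2 ^ (3 * s + 1) + 2 ^ (2 * s) - 2 ^ (s + 1) + 1)) := by
  intro a
  obtain ⟨d, r, h1, h2, h3, m1, m2, m3⟩ := main19 s hs F H hF hH f β hβ ω hω a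
  obtain ⟨k, rfl⟩ : ∃ k, s = k + 1 := ⟨s - 1, by omega⟩
  have e3 : (2 : ℤ) ^ (3 * (k + 1)) = (2 ^ (k + 1)) ^ 3 := by rw [← pow_mul, mul_comm]
  have e2 : (2 : ℤ) ^ (2 * (k + 1)) = (2 ^ (k + 1)) ^ 2 := by rw [← pow_mul, mul_comm]
  have e1 : (2 : ℤ) ^ (k + 1) = 2 * 2 ^ k := by ring
  rw [pow_succ (2 : ℤ) (3 * (k + 1)), pow_succ (2 : ℤ) (k + 1), e3, e2, Nat.add_sub_cancel]
  rw [e1] at m1 m2 ⊢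
  generalize (2 : ℤ) ^ k = p at *
  refine ⟨fun h => ?_, fun h => ?_, fun h => ?_⟩
  · obtain ⟨rfl, rfl⟩ := h1 h
    refine ⟨by linarith, by linarith, by linarith⟩
  · obtain ⟨rfl, rfl⟩ := h2 h
    refine ⟨by linarith, by linarith, by linarith⟩
  · obtain ⟨rfl, rfl⟩ := h3 h
    refine ⟨by linarith, by linarith, by linarith⟩
end
end
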